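/- arXiv:1306.3910 — 2 statements merged into one kernel-verified Lean document; each statement's English description precedes it below -/
import Mathlib

section
/- (Schur's conjecture in ℝ⁴.) For every n ≥ 5: (a) every set X of n points in Euclidean 4-space with all pairwise distances at most 1 contains at most n four-element subsets in which all six pairwise distances equal 1; and (b) there exists such an n-point set X containing exactly n such four-element subsets. -/
attribute [local instance] Classical.propDecidable

/-- The set of 4-element subsets of `X` with all six pairwise distances equal to `1`
(unit simplices / 4-cliques of the diameter graph). -/
noncomputable def unitSimplices (X : Finset (EuclideanSpace ℝ (Fin 4))) :
    Finset (Finset (EuclideanSpace ℝ (Fin 4))) :=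
  (X.powersetCard 4).filter (fun s => ∀ x ∈ s, ∀ y ∈ s, x ≠ y → ‖x - y‖ = 1)

/-!
Two unit `(d - 1)`-simplices `a`, `b` in a set of diameter at most one in `ℝᵈ` share at least
`d - 2` vertices. The matrix `F` with entries `1 - ‖a i - b j‖ ^ 2` has entries in `[0, 1]`, and an
entry is `1` exactly at a common vertex. The affine relations between `a` and `b`, of which there
are many because the `2 d` points lie in `ℝᵈ`, provide a large space of vectors fixed by `F Fᵀ`. By
a Perron-Frobenius argument the signs of such a vector are constrained: a fixed vector supported on
three rows can be chosen so that one of its signs occurs only once, and the row where it occurs must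
contain a `1`.

Now let `X` be a set of `n` points of diameter at most one. If every `(d - 2)`-face lies in at most
two of the `(d - 1)`-simplices, counting the neighbours of a simplex, or the simplices around a
common `(d - 3)`-face, bounds their number by `max (d + 1) n`. If three simplices share a
`(d - 2)`-face, the affine relation between the face and the three apexes shows that some apex lies
in one simplex only, and removing it reduces `n`. Equality is attained by a `(d - 2)`-simplex
together with points on the circle at distance one from all its vertices.
-/

open Finset

section Cliques

variable {V : Type*} {G : SimpleGraph V} {X : Finset V} {k m : ℕ}

/-- The cliques of `G` with `k` vertices that lie in the finite vertex set `X`. -/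
noncomputable def cliquesIn (G : SimpleGraph V) (k : ℕ) (X : Finset V) : Finset (Finset V) :=
  (X.powersetCard k).filter fun D => G.IsClique D

theorem mem_cliquesIn {D : Finset V} : D ∈ cliquesIn G k X ↔ D ⊆ X ∧ G.IsNClique k D := by
  rw [cliquesIn, mem_filter, mem_powersetCard, SimpleGraph.isNClique_iff, and_assoc,
    and_comm (b := _ = k)]

/-- The `(m + 2)`-cliques of `G` in `X` form a *thin* complex: every face with one vertex less
lies in at most two of them. -/
def IsThin (G : SimpleGraph V) (m : ℕ) (X : Finset V) : Prop :=
  ∀ T : Finset V, #T = m + 1 → #{D ∈ cliquesIn G (m + 2) X | T ⊆ D} ≤ 2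

theorem insert_mem_cliquesIn {T : Finset V} {x : V} (hT : T ∈ cliquesIn G k X) (hx : x ∈ X)
    (hadj : ∀ t ∈ T, G.Adj x t) : insert x T ∈ cliquesIn G (k + 1) X := by
  rw [mem_cliquesIn] at hT ⊢
  exact ⟨insert_subset hx hT.1, hT.2.insert hadj⟩

theorem mem_cliquesIn_of_subset {T A : Finset V} (hA : A ∈ cliquesIn G k X) (hTA : T ⊆ A) :
    T ∈ cliquesIn G #T X := by
  rw [mem_cliquesIn] at hA ⊢
  exact ⟨hTA.trans hA.1, hA.2.isClique.subset (coe_subset.2 hTA), rfl⟩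

theorem card_cliquesIn_le_card_of_card_le (hX : #X ≤ k + 1) : #(cliquesIn G (k + 1) X) ≤ #X := by
  refine (card_filter_le _ _).trans ?_
  rw [card_powersetCard]
  obtain hlt | heq := hX.lt_or_eq
  · simp [Nat.choose_eq_zero_of_lt hlt]
  · simp [heq]

theorem IsThin.card_le_card_of_forall_subset (hthin : IsThin G m X) {R : Finset V} (hR : #R = m)
    (h : ∀ D ∈ cliquesIn G (m + 2) X, R ⊆ D) : #(cliquesIn G (m + 2) X) ≤ #X := by
  have hdeg : ∀ D ∈ cliquesIn G (m + 2) X, 2 ≤ #((X \ R).bipartiteAbove (fun D x => x ∈ D) D) := by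
    intro D hD
    obtain ⟨hDX, hDc⟩ := mem_cliquesIn.1 hD
    have hsub : D \ R ⊆ (X \ R).bipartiteAbove (fun D x => x ∈ D) D := fun x hx => by
      rw [mem_bipartiteAbove, mem_sdiff]
      exact ⟨⟨hDX (mem_sdiff.1 hx).1, (mem_sdiff.1 hx).2⟩, (mem_sdiff.1 hx).1⟩
    have := card_le_card hsub
    rw [card_sdiff_of_subset (h D hD), hDc.card_eq, hR] at this
    omega
  have hthin' : ∀ x ∈ X \ R,
      #((cliquesIn G (m + 2) X).bipartiteBelow (fun D x => x ∈ D) x) ≤ 2 := by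
    intro x hx
    refine (card_le_card fun D hD => ?_).trans
      (hthin (insert x R) (by rw [card_insert_of_notMem (mem_sdiff.1 hx).2, hR]))
    rw [mem_bipartiteBelow] at hD
    exact mem_filter.2 ⟨hD.1, insert_subset hD.2 (h D hD.1)⟩
  have := card_mul_le_card_mul _ hdeg hthin'
  have := card_le_card (sdiff_subset : X \ R ⊆ X)
  omega

theorem IsThin.card_le_of_forall_card_inter (hthin : IsThin G m X) {S : Finset V}
    (hS : S ∈ cliquesIn G (m + 2) X)
    (h : ∀ D ∈ cliquesIn G (m + 2) X, m + 1 ≤ #(D ∩ S)) : #(cliquesIn G (m + 2) X) ≤ m + 3 := by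
  have hcard : ∀ D ∈ cliquesIn G (m + 2) X, #D = m + 2 := fun D hD =>
    (mem_cliquesIn.1 hD).2.card_eq
  have hinter : ∀ D ∈ (cliquesIn G (m + 2) X).erase S, #(D ∩ S) = m + 1 := by
    intro D hD
    obtain ⟨hne, hD⟩ := mem_erase.1 hD
    refine le_antisymm (Nat.lt_succ_iff.1 (lt_of_not_ge fun hle => hne ?_)) (h D hD)
    exact (eq_of_subset_of_card_le inter_subset_left (by rw [hcard D hD]; exact hle)).symm.trans
      (eq_of_subset_of_card_le inter_subset_right (by rw [hcard S hS]; exact hle))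
  have hinj : Set.InjOn (· ∩ S) ((cliquesIn G (m + 2) X).erase S : Set (Finset V)) := by
    intro D hD E hE hDE
    by_contra hne
    obtain ⟨hDS, hD'⟩ := mem_erase.1 (mem_coe.1 hD)
    obtain ⟨hES, hE'⟩ := mem_erase.1 (mem_coe.1 hE)
    refine (hthin (D ∩ S) (hinter D hD)).not_gt (two_lt_card.2
      ⟨D, ?_, E, ?_, S, ?_, hne, hDS, hES⟩) <;> rw [mem_filter]
    · exact ⟨hD', inter_subset_left⟩
    · exact ⟨hE', hDE.subset.trans inter_subset_left⟩
    · exact ⟨hS, inter_subset_right⟩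
  have hle : #((cliquesIn G (m + 2) X).erase S) ≤ #(S.powersetCard (m + 1)) :=
    card_le_card_of_injOn _ (fun D hD => mem_powersetCard.2 ⟨inter_subset_right, hinter D hD⟩) hinj
  rw [card_erase_of_mem hS, card_powersetCard, hcard S hS, Nat.choose_succ_self_right] at hle
  omega

theorem IsThin.mem_or_mem_of_forall_adj (hthin : IsThin G m X) {A S T : Finset V} {g : V}
    (hA : A ∈ cliquesIn G (m + 2) X) (hS : S ∈ cliquesIn G (m + 2) X) (hAS : A ≠ S)
    (hT : #T = m + 1) (hTA : T ⊆ A) (hTS : T ⊆ S) (hg : g ∈ X) (hadj : ∀ t ∈ T, G.Adj g t) :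
    g ∈ A ∨ g ∈ S := by
  by_contra! hgAS
  have hgT : insert g T ∈ cliquesIn G (m + 2) X :=
    insert_mem_cliquesIn (hT ▸ mem_cliquesIn_of_subset hA hTA) hg hadj
  refine (hthin T hT).not_gt (two_lt_card.2 ⟨A, ?_, S, ?_, insert g T, ?_, hAS, ?_, ?_⟩)
  · exact mem_filter.2 ⟨hA, hTA⟩
  · exact mem_filter.2 ⟨hS, hTS⟩
  · exact mem_filter.2 ⟨hgT, subset_insert g T⟩
  · exact fun h => hgAS.1 (h ▸ mem_insert_self g T)
  · exact fun h => hgAS.2 (h ▸ mem_insert_self g T)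

theorem exists_three_insert_mem_of_not_isThin (hthin : ¬IsThin G m X) :
    ∃ T : Finset V, #T = m + 1 ∧ ∃ p : Fin 3 → V, Function.Injective p ∧
      ∀ k, p k ∉ T ∧ insert (p k) T ∈ cliquesIn G (m + 2) X := by
  simp only [IsThin, not_forall, not_le, exists_prop] at hthin
  obtain ⟨T, hT, hthree⟩ := hthin
  obtain ⟨S, hS, hScard⟩ := exists_subset_card_eq hthree
  let e := S.equivFinOfCardEq hScard
  have hmem (k : Fin 3) := mem_filter.1 (hS (e.symm k).2)
  have hins (k : Fin 3) : ∃ p ∉ T, insert p T = e.symm k := by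
    refine exists_eq_insert_iff.2 ⟨(hmem k).2, ?_⟩
    rw [hT, (mem_cliquesIn.1 (hmem k).1).2.card_eq]
  choose p hpT hp using hins
  refine ⟨T, hT, p, fun k l h => ?_, fun k => ⟨hpT k, (hp k).symm ▸ (hmem k).1⟩⟩
  exact e.symm.injective (Subtype.ext (by rw [← hp, ← hp, h]))

theorem lt_card_inter_of_three_flips
    (hpair : ∀ A ∈ cliquesIn G (m + 2) X, ∀ B ∈ cliquesIn G (m + 2) X, m ≤ #(A ∩ B))
    {S Q : Finset V} (hS : S ∈ cliquesIn G (m + 2) X) (hQS : Q ⊆ S) (hQ : #Q = 3)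
    (hflip : ∀ s ∈ Q, ∃ d ≠ s, ¬G.Adj d s ∧ insert d (S.erase s) ∈ cliquesIn G (m + 2) X)
    {D : Finset V} (hD : D ∈ cliquesIn G (m + 2) X) : m + 1 ≤ #(D ∩ S) := by
  by_contra! hlt
  have hnotMem : ∀ s ∈ Q, s ∉ D := by
    intro s hs hsD
    obtain ⟨d, hds, hadj, hN⟩ := hflip s hs
    have hd : d ∉ D := fun hd => hadj ((mem_cliquesIn.1 hD).2.isClique hd hsD hds)
    have hsub : D ∩ insert d (S.erase s) ⊆ (D ∩ S).erase s := by
      rw [inter_insert_of_notMem hd, inter_erase]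
    have := card_le_card hsub
    have := card_erase_lt_of_mem (mem_inter.2 ⟨hsD, hQS hs⟩)
    have := hpair D hD _ hN
    omega
  have hQD : #Q ≤ #(S \ D) := card_le_card fun s hs => mem_sdiff.2 ⟨hQS hs, hnotMem s hs⟩
  have hS_card := (mem_cliquesIn.1 hS).2.card_eq
  have hDS := card_sdiff_add_card_inter S D
  rw [inter_comm] at hDS
  have := hpair D hD S hS
  omega

theorem IsThin.exists_flip_of_adj (hthin : IsThin G m X) {A B : Finset V} {c e : V}
    (hA : A ∈ cliquesIn G (m + 2) X) (hB : B ∈ cliquesIn G (m + 2) X) (hAB : #(A ∩ B) = m)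
    (hc : c ∈ A \ B) (he : e ∈ B \ A) (hce : G.Adj c e) :
    insert c (insert e (A ∩ B)) ∈ cliquesIn G (m + 2) X ∧
      ∃ d ≠ e, ¬G.Adj d e ∧ insert d (insert c (A ∩ B)) = A := by
  obtain ⟨hcA, hcB⟩ := mem_sdiff.1 hc
  obtain ⟨heB, heA⟩ := mem_sdiff.1 he
  have hAclique := (mem_cliquesIn.1 hA).2
  have hcR : c ∉ A ∩ B := fun h => hcB (mem_inter.1 h).2
  have heR : e ∉ A ∩ B := fun h => heA (mem_inter.1 h).1
  have hcard : #(insert e (A ∩ B)) = m + 1 := by rw [card_insert_of_notMem heR, hAB]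
  have heRB : insert e (A ∩ B) ⊆ B := insert_subset heB inter_subset_right
  have hS : insert c (insert e (A ∩ B)) ∈ cliquesIn G (m + 2) X := by
    refine insert_mem_cliquesIn (hcard ▸ mem_cliquesIn_of_subset hB heRB)
      ((mem_cliquesIn.1 hA).1 hcA) fun t ht => ?_
    obtain rfl | ht := mem_insert.1 ht
    · exact hce
    · exact hAclique.isClique hcA (mem_inter.1 ht).1 fun h => hcR (h ▸ ht)
  obtain ⟨d, hd, hdA⟩ : ∃ d ∉ insert c (A ∩ B), insert d (insert c (A ∩ B)) = A := by
    refine exists_eq_insert_iff.2 ⟨insert_subset hcA inter_subset_left, ?_⟩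
    rw [card_insert_of_notMem hcR, hAB, hAclique.card_eq]
  obtain ⟨hdc, hdR⟩ := not_or.1 (mt mem_insert.2 hd)
  have hd_mem : d ∈ A := hdA ▸ mem_insert_self _ _
  have hdB : d ∉ B := fun h => hdR (mem_inter.2 ⟨hd_mem, h⟩)
  have hde : d ≠ e := fun h => hdB (h ▸ heB)
  refine ⟨hS, d, hde, fun hadj => ?_, hdA⟩
  have hdS : d ∉ insert c (insert e (A ∩ B)) := by
    rw [mem_insert, mem_insert]
    exact not_or.2 ⟨hdc, not_or.2 ⟨hde, hdR⟩⟩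
  refine (hthin.mem_or_mem_of_forall_adj hB hS (fun h => hcB (h ▸ mem_insert_self _ _)) hcard heRB
    (subset_insert _ _) ((mem_cliquesIn.1 hA).1 hd_mem) fun t ht => ?_).elim hdB hdS
  obtain rfl | ht := mem_insert.1 ht
  · exact hadj
  · exact hAclique.isClique hd_mem (mem_inter.1 ht).1 fun h => hdR (h ▸ ht)

theorem exists_insert_erase_eq_of_erase_subset {S C : Finset V} {b : V} (hcard : #S = #C)
    (hb : b ∈ S) (hbC : b ∉ C) (h : S.erase b ⊆ C) : ∃ g ∉ S, insert g (S.erase b) = C := by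
  obtain ⟨g, hg, hgC⟩ := exists_eq_insert_iff.2 ⟨h, (card_erase_add_one hb).trans hcard⟩
  refine ⟨g, fun hgS => hg (mem_erase.2 ⟨?_, hgS⟩), hgC⟩
  rintro rfl
  exact hbC (hgC ▸ mem_insert_self _ _)

theorem IsThin.exists_flip_of_notMem (hthin : IsThin G m X)
    (hpair : ∀ A ∈ cliquesIn G (m + 2) X, ∀ B ∈ cliquesIn G (m + 2) X, m ≤ #(A ∩ B))
    {R C : Finset V} {b c d e : V} (hA : insert d (insert c R) ∈ cliquesIn G (m + 2) X)
    (hS : insert c (insert e R) ∈ cliquesIn G (m + 2) X) (hC : C ∈ cliquesIn G (m + 2) X)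
    (hR : #R = m) (hb : b ∈ R) (hbC : b ∉ C) (hcC : c ∈ C) (heC : e ∈ C) (hdC : d ∉ C)
    (hcR : c ∉ R) (heR : e ∉ R) (hce : c ≠ e) :
    ∃ g ≠ b, ¬G.Adj g b ∧ insert g ((insert c (insert e R)).erase b) = C := by
  have hCR : C ∩ R = R.erase b := by
    refine eq_of_subset_of_card_le (fun x hx => ?_) ?_
    · exact mem_erase.2 ⟨fun h => hbC (h ▸ (mem_inter.1 hx).1), (mem_inter.1 hx).2⟩
    · have hle := hpair C hC _ hA
      rw [inter_insert_of_notMem hdC, inter_insert_of_mem hcC] at hle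
      have := card_insert_le c (C ∩ R)
      rw [card_erase_of_mem hb]
      omega
  have hSC : (insert c (insert e R)).erase b ⊆ C := by
    rw [erase_insert_of_ne fun h : c = b => hbC (h ▸ hcC),
      erase_insert_of_ne fun h : e = b => hbC (h ▸ heC), ← hCR]
    exact insert_subset hcC (insert_subset heC inter_subset_left)
  obtain ⟨g, hgS, hgC⟩ := exists_insert_erase_eq_of_erase_subset
    ((mem_cliquesIn.1 hS).2.card_eq.trans (mem_cliquesIn.1 hC).2.card_eq.symm)
    (mem_insert_of_mem (mem_insert_of_mem hb)) hbC hSC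
  have hgC_mem : g ∈ C := hgC ▸ mem_insert_self _ _
  have hTS : insert c R ⊆ insert c (insert e R) := insert_subset_insert c (subset_insert e R)
  refine ⟨g, fun h => hbC (h ▸ hgC_mem), fun hadj => ?_, hgC⟩
  have heA : e ∉ insert d (insert c R) := by
    simp only [mem_insert, not_or]
    exact ⟨fun h => hdC (h ▸ heC), hce.symm, heR⟩
  have hgA : g ∉ insert d (insert c R) := fun h => (mem_insert.1 h).elim
    (fun h => hdC (h ▸ hgC_mem)) fun h => hgS (hTS h)
  refine (hthin.mem_or_mem_of_forall_adj (T := insert c R) hA hS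
    (fun h => heA (h ▸ mem_insert_of_mem (mem_insert_self e R)))
    (by rw [card_insert_of_notMem hcR, hR]) (subset_insert _ _) hTS
    ((mem_cliquesIn.1 hC).1 hgC_mem) fun t ht => ?_).elim hgA hgS
  obtain rfl | htb := eq_or_ne t b
  · exact hadj
  · exact (mem_cliquesIn.1 hC).2.isClique hgC_mem (hSC (mem_erase.2 ⟨htb, hTS ht⟩))
      fun h => hgS (hTS (h ▸ ht))

theorem IsThin.exists_forall_lt_card_inter (hthin : IsThin G m X)
    (hpair : ∀ A ∈ cliquesIn G (m + 2) X, ∀ B ∈ cliquesIn G (m + 2) X, m ≤ #(A ∩ B))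
    {A B C : Finset V} {b : V} (hA : A ∈ cliquesIn G (m + 2) X) (hB : B ∈ cliquesIn G (m + 2) X)
    (hC : C ∈ cliquesIn G (m + 2) X) (hAB : #(A ∩ B) = m) (hb : b ∈ A ∩ B) (hbC : b ∉ C) :
    ∃ S ∈ cliquesIn G (m + 2) X, ∀ D ∈ cliquesIn G (m + 2) X, m + 1 ≤ #(D ∩ S) := by
  set R := A ∩ B with hR
  have hCR : #(C ∩ R) < m := hAB ▸ card_lt_card
    ⟨inter_subset_right, fun h => hbC (mem_inter.1 (h hb)).1⟩
  have hmeet : ∀ N ∈ cliquesIn G (m + 2) X, ∃ x ∈ C, x ∈ N \ R := by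
    intro N hN
    obtain ⟨x, hx, hxR⟩ := exists_mem_notMem_of_card_lt_card (hCR.trans_le (hpair C hC N hN))
    obtain ⟨hxC, hxN⟩ := mem_inter.1 hx
    exact ⟨x, hxC, mem_sdiff.2 ⟨hxN, fun h => hxR (mem_inter.2 ⟨hxC, h⟩)⟩⟩
  obtain ⟨c, hcC, hc⟩ := hmeet A hA
  obtain ⟨e, heC, he⟩ := hmeet B hB
  have hcR := (mem_sdiff.1 hc).2
  have heR := (mem_sdiff.1 he).2
  rw [hR, sdiff_inter_self_left] at hc
  rw [hR, sdiff_inter_self_right] at he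
  have hce : c ≠ e := fun h => (mem_sdiff.1 he).2 (h ▸ (mem_sdiff.1 hc).1)
  have hadj : G.Adj c e := (mem_cliquesIn.1 hC).2.isClique hcC heC hce
  obtain ⟨hS, d, hde, hadj_de, hdA⟩ := hthin.exists_flip_of_adj hA hB hAB hc he hadj
  obtain ⟨-, f, hfc, hadj_fc, hfB⟩ :=
    hthin.exists_flip_of_adj hB hA (by rwa [inter_comm]) he hc hadj.symm
  rw [inter_comm B A, ← hR] at hfB
  rw [← hR] at hS hdA
  have hdC : d ∉ C := fun h => hadj_de ((mem_cliquesIn.1 hC).2.isClique h heC hde)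
  obtain ⟨g, hgb, hadj_gb, hgC⟩ := hthin.exists_flip_of_notMem hpair (hdA.symm ▸ hA) hS hC hAB
    hb hbC hcC heC hdC hcR heR hce
  refine ⟨insert c (insert e R), hS, fun D => lt_card_inter_of_three_flips (Q := {b, c, e}) hpair hS
    ?_ ?_ ?_⟩
  · simp [insert_subset_iff, hb]
  · exact card_eq_three.2 ⟨b, c, e, fun h => hcR (h ▸ hb), fun h => heR (h ▸ hb), hce, rfl⟩
  simp only [mem_insert, mem_singleton, forall_eq_or_imp, forall_eq]
  refine ⟨⟨g, hgb, hadj_gb, hgC.symm ▸ hC⟩, ⟨f, hfc, hadj_fc, ?_⟩, ⟨d, hde, hadj_de, ?_⟩⟩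
  · rwa [erase_insert (by simp [hce, hcR]), hfB]
  · rwa [erase_insert_of_ne hce, erase_insert heR, hdA]

theorem IsThin.card_le_max (hthin : IsThin G m X)
    (hpair : ∀ A ∈ cliquesIn G (m + 2) X, ∀ B ∈ cliquesIn G (m + 2) X, m ≤ #(A ∩ B)) :
    #(cliquesIn G (m + 2) X) ≤ max (m + 3) #X := by
  by_cases hcenter : ∃ S ∈ cliquesIn G (m + 2) X, ∀ D ∈ cliquesIn G (m + 2) X, m + 1 ≤ #(D ∩ S)
  · obtain ⟨S, hS, h⟩ := hcenter
    exact le_max_of_le_left (hthin.card_le_of_forall_card_inter hS h)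
  refine le_max_of_le_right ?_
  obtain hempty | ⟨A, hA⟩ := (cliquesIn G (m + 2) X).eq_empty_or_nonempty
  · simp [hempty]
  obtain ⟨B, hB, hAB⟩ : ∃ B ∈ cliquesIn G (m + 2) X, #(B ∩ A) < m + 1 := by
    by_contra! h
    exact hcenter ⟨A, hA, h⟩
  have hcard : #(A ∩ B) = m :=
    le_antisymm (inter_comm A B ▸ Nat.lt_succ_iff.1 hAB) (hpair A hA B hB)
  refine hthin.card_le_card_of_forall_subset hcard fun C hC b hb => ?_
  by_contra hbC
  exact hcenter (hthin.exists_forall_lt_card_inter hpair hA hB hC hcard hb hbC)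

theorem card_union_le_card_cliquesIn {T P : Finset V} {p q : V} (hT : G.IsNClique (m + 1) T)
    (hp : p ∈ P) (hq : q ∈ P) (hpq : G.Adj p q) (hTP : ∀ t ∈ T, ∀ x ∈ P, G.Adj t x) :
    #(T ∪ P) ≤ #(cliquesIn G (m + 2) (T ∪ P)) := by
  have hTclique : T ∈ cliquesIn G (m + 1) (T ∪ P) := mem_cliquesIn.2 ⟨subset_union_left, hT⟩
  have hp' : p ∈ T ∪ P := mem_union_right _ hp
  have hq' : q ∈ T ∪ P := mem_union_right _ hq
  have hnotMem : ∀ x ∈ T, x ∉ insert p (insert q (T.erase x)) := by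
    intro x hx
    simp only [mem_insert, mem_erase, not_or]
    exact ⟨(hTP x hx p hp).ne, (hTP x hx q hq).ne, fun h => h.1 rfl⟩
  refine card_le_card_of_injOn
    (fun x => if x ∈ T then insert p (insert q (T.erase x)) else insert x T) ?_ ?_
  · intro x hx
    dsimp only
    split_ifs with hxT
    · have herase : T.erase x ∈ cliquesIn G m (T ∪ P) := by
        have := mem_cliquesIn_of_subset hTclique (erase_subset x T)
        rwa [card_erase_of_mem hxT, hT.card_eq] at this
      refine insert_mem_cliquesIn (insert_mem_cliquesIn herase hq' fun t ht =>
        (hTP t (mem_of_mem_erase ht) q hq).symm) hp' fun t ht => ?_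
      obtain rfl | ht := mem_insert.1 ht
      exacts [hpq, (hTP t (mem_of_mem_erase ht) p hp).symm]
    · have hxP := (mem_union.1 hx).resolve_left hxT
      exact insert_mem_cliquesIn hTclique hx fun t ht => (hTP t ht x hxP).symm
  · intro x _ y _ hxy
    dsimp only at hxy
    split_ifs at hxy with hxT hyT hyT
    · by_contra hne
      exact hnotMem x hxT (hxy ▸ mem_insert_of_mem (mem_insert_of_mem (mem_erase.2 ⟨hne, hxT⟩)))
    · exact absurd (hxy ▸ mem_insert_of_mem hxT) (hnotMem x hxT)
    · exact absurd (hxy ▸ mem_insert_of_mem hyT) (hnotMem y hyT)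
    · exact (mem_insert.1 (hxy ▸ mem_insert_self x T)).resolve_right hxT

end Cliques

section AffineRelations

variable {ι κ E : Type*} [NormedAddCommGroup E]

/-- A regular simplex of side one, indexed by its vertices. -/
def IsUnitSimplex (a : ι → E) : Prop :=
  Pairwise fun i j => ‖a i - a j‖ = 1

theorem IsUnitSimplex.injective {a : ι → E} (ha : IsUnitSimplex a) :
    Function.Injective a := fun i j hij => by
  by_contra h
  simpa [hij] using ha h

variable [Fintype ι] [Fintype κ]

theorem IsUnitSimplex.sum_mul_norm_sub_sq {a : ι → E} (ha : IsUnitSimplex a) (x : ι → ℝ) (i : ι) :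
    ∑ j, x j * ‖a i - a j‖ ^ 2 = ∑ j, x j - x i := by
  have h (j : ι) : x j * ‖a i - a j‖ ^ 2 = x j - if i = j then x j else 0 := by
    split_ifs with hij
    · simp [hij]
    · simp [ha hij]
  simp [h]

/-- The moment of inertia of the signed weights `(x, -y)`; on an affine relation it does not depend
on the origin. -/
noncomputable def power (a : ι → E) (b : κ → E) : ((ι → ℝ) × (κ → ℝ)) →ₗ[ℝ] ℝ :=
  (Fintype.linearCombination ℝ fun i => ‖a i‖ ^ 2).coprod
    (-Fintype.linearCombination ℝ fun j => ‖b j‖ ^ 2)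

theorem power_apply (a : ι → E) (b : κ → E) (x : ι → ℝ) (y : κ → ℝ) :
    power a b (x, y) = ∑ i, x i * ‖a i‖ ^ 2 - ∑ j, y j * ‖b j‖ ^ 2 := by
  simp [power, Fintype.linearCombination_apply, sub_eq_add_neg]

variable [InnerProductSpace ℝ E]

/-- The affine relations between two finite families of points: pairs of weights with the same
total weight and the same weighted sum of points. -/
noncomputable def affineRelations (a : ι → E) (b : κ → E) : Submodule ℝ ((ι → ℝ) × (κ → ℝ)) :=
  LinearMap.ker ((Fintype.linearCombination ℝ fun i => ((1 : ℝ), a i)).coprod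
    (-Fintype.linearCombination ℝ fun j => ((1 : ℝ), b j)))

theorem mem_affineRelations {a : ι → E} {b : κ → E} {x : ι → ℝ} {y : κ → ℝ} :
    (x, y) ∈ affineRelations a b ↔ ∑ i, x i = ∑ j, y j ∧ ∑ i, x i • a i = ∑ j, y j • b j := by
  simp [affineRelations, Fintype.linearCombination_apply, ← sub_eq_add_neg, sub_eq_zero,
    Prod.ext_iff, Prod.fst_sum, Prod.snd_sum]

theorem card_add_card_le_finrank_affineRelations [FiniteDimensional ℝ E] (a : ι → E) (b : κ → E) :
    Fintype.card ι + Fintype.card κ ≤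
      Module.finrank ℝ (affineRelations a b) + (Module.finrank ℝ E + 1) := by
  set f := (Fintype.linearCombination ℝ fun i => ((1 : ℝ), a i)).coprod
    (-Fintype.linearCombination ℝ fun j => ((1 : ℝ), b j)) with hf
  have hrank := f.finrank_range_add_finrank_ker
  have hrange : Module.finrank ℝ (LinearMap.range f) ≤ Module.finrank ℝ (ℝ × E) :=
    Submodule.finrank_le _
  rw [Module.finrank_prod, Module.finrank_self] at hrange
  rw [Module.finrank_prod, Module.finrank_fintype_fun_eq_card, Module.finrank_fintype_fun_eq_card]
    at hrank
  rw [affineRelations, ← hf]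
  omega

theorem sum_mul_norm_sub_sq (a : ι → E) (x : ι → ℝ) (w : E) :
    ∑ i, x i * ‖w - a i‖ ^ 2 =
      (∑ i, x i) * ‖w‖ ^ 2 - 2 * inner ℝ w (∑ i, x i • a i) + ∑ i, x i * ‖a i‖ ^ 2 := by
  simp_rw [inner_sum, inner_smul_right, mul_sum, sum_mul, ← sum_sub_distrib, ← sum_add_distrib,
    norm_sub_sq_real]
  exact sum_congr rfl fun i _ => by ring

theorem sum_mul_norm_sub_sq_sub_eq_power {a : ι → E} {b : κ → E} {x : ι → ℝ} {y : κ → ℝ}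
    (h : (x, y) ∈ affineRelations a b) (w : E) :
    ∑ i, x i * ‖w - a i‖ ^ 2 - ∑ j, y j * ‖w - b j‖ ^ 2 = power a b (x, y) := by
  obtain ⟨hsum, hvec⟩ := mem_affineRelations.1 h
  rw [sum_mul_norm_sub_sq, sum_mul_norm_sub_sq, power_apply, hsum, hvec]
  ring

theorem affineRelations_apply_eq_power {a : ι → E} {p : κ → E} (ha : IsUnitSimplex a)
    (hpa : ∀ k j, ‖p k - a j‖ = 1) {α : κ → ℝ} {y : ι → ℝ} (h : (α, y) ∈ affineRelations p a)
    (j : ι) : y j = power p a (α, y) := by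
  have := sum_mul_norm_sub_sq_sub_eq_power h (a j)
  have hap (k : κ) : ‖a j - p k‖ = 1 := norm_sub_rev (p k) (a j) ▸ hpa k j
  simp only [ha.sum_mul_norm_sub_sq, hap, one_pow, mul_one, (mem_affineRelations.1 h).1] at this
  linarith

theorem sum_mul_norm_sub_sq_eq {a : ι → E} {p : κ → E} (ha : IsUnitSimplex a)
    (hpa : ∀ k j, ‖p k - a j‖ = 1) {α : κ → ℝ} {y : ι → ℝ} (h : (α, y) ∈ affineRelations p a)
    (w : E) : ∑ k, α k * ‖w - p k‖ ^ 2 = power p a (α, y) * (1 + ∑ j, ‖w - a j‖ ^ 2) := by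
  have := sum_mul_norm_sub_sq_sub_eq_power h w
  simp_rw [affineRelations_apply_eq_power ha hpa h, ← mul_sum] at this
  linarith

theorem exists_affineRelations_power_nonneg [FiniteDimensional ℝ E] (a : ι → E) (b : κ → E)
    (hcard : Module.finrank ℝ E + 1 < Fintype.card ι + Fintype.card κ) :
    ∃ z ∈ affineRelations a b, z ≠ 0 ∧ 0 ≤ power a b z := by
  have hrank := card_add_card_le_finrank_affineRelations a b
  have hpos : 0 < Module.finrank ℝ (affineRelations a b) := by omega
  obtain ⟨⟨z, hz⟩, hz0⟩ := Module.finrank_pos_iff_exists_ne_zero.1 hpos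
  have hz0 : z ≠ 0 := fun h => hz0 (Subtype.ext h)
  obtain h | h := le_total 0 (power a b z)
  · exact ⟨z, hz, hz0, h⟩
  · exact ⟨-z, neg_mem hz, neg_ne_zero.2 hz0, by rw [map_neg]; exact neg_nonneg.2 h⟩

theorem exists_forall_ne_pos {α : Fin 3 → ℝ} {D : Fin 3 → Fin 3 → ℝ} {c N : ℝ}
    (hD_self : ∀ k, D k k = 0) (hD_pos : ∀ k l, k ≠ l → 0 < D k l) (hD_le : ∀ k l, D k l ≤ 1)
    (hc : 0 ≤ c) (hN : 0 ≤ N) (hsum : ∑ k, α k = N * c)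
    (hrow : ∀ k, ∑ l, α l * D k l = c * (1 + N)) (hα : α ≠ 0) :
    ∃ i, (∀ k ≠ i, 0 < α k) ∧ 0 < c := by
  obtain ⟨i, hi⟩ : ∃ i, α i < 0 := by
    by_contra! hnonneg
    refine hα (funext fun k => le_antisymm ?_ (hnonneg k))
    have hle : α k * (1 - D k k) ≤ ∑ l, α l * (1 - D k l) :=
      single_le_sum (f := fun l => α l * (1 - D k l))
        (fun l _ => mul_nonneg (hnonneg l) (sub_nonneg.2 (hD_le k l))) (mem_univ k)
    simp only [mul_sub, mul_one, sum_sub_distrib, hrow, hsum, hD_self, sub_zero] at hle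
    simp only [Pi.zero_apply]
    linarith
  have hpos : ∀ k ≠ i, 0 < α k := by
    intro k hki
    by_contra! hk
    obtain ⟨l, hlk, hli⟩ := Fin.exists_ne_and_ne_of_two_lt k i (by norm_num)
    refine (mul_nonneg hc (by linarith : 0 ≤ 1 + N)).not_gt (hrow l ▸ sum_neg' (fun j _ => ?_)
      ⟨i, mem_univ i, mul_neg_of_neg_of_pos hi (hD_pos l i hli)⟩)
    by_cases hjl : j = l
    · rw [hjl, hD_self, mul_zero]
    · have hj : α j ≤ 0 := by
        obtain rfl | rfl : j = i ∨ j = k := by omega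
        exacts [hi.le, hk]
      exact mul_nonpos_of_nonpos_of_nonneg hj (hD_pos l j (Ne.symm hjl)).le
  refine ⟨i, hpos, ?_⟩
  obtain ⟨k, hki, -⟩ := Fin.exists_ne_and_ne_of_two_lt i i (by norm_num)
  have hi_row : 0 < ∑ l, α l * D i l := by
    refine sum_pos' (fun l _ => ?_) ⟨k, mem_univ k, mul_pos (hpos k hki) (hD_pos i k hki.symm)⟩
    by_cases hli : l = i
    · rw [hli, hD_self, mul_zero]
    · exact (mul_pos (hpos l hli) (hD_pos i l (Ne.symm hli))).le
  exact pos_of_mul_pos_left (hrow i ▸ hi_row) (by linarith)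

theorem exists_forall_sum_norm_sub_sq_le [FiniteDimensional ℝ E]
    (hcard : Module.finrank ℝ E ≤ Fintype.card ι + 1) {a : ι → E} (ha : IsUnitSimplex a)
    {p : Fin 3 → E} (hp : Function.Injective p) (hp1 : ∀ k l, ‖p k - p l‖ ≤ 1)
    (hpa : ∀ k j, ‖p k - a j‖ = 1) :
    ∃ i, ∀ w, (∀ k, ‖w - p k‖ ≤ 1) → ‖w - p i‖ = 1 →
      ∑ j, ‖w - a j‖ ^ 2 ≤ Fintype.card ι - 1 := by
  obtain ⟨⟨α, y⟩, h, hne, hpow⟩ := exists_affineRelations_power_nonneg p a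
    (by rw [Fintype.card_fin]; omega)
  set c := power p a (α, y) with hc
  have hy (j : ι) : y j = c := affineRelations_apply_eq_power ha hpa h j
  have hα_sum : ∑ k, α k = Fintype.card ι * c := by
    rw [(mem_affineRelations.1 h).1]
    simp [hy]
  have hweight (w : E) : ∑ k, α k * ‖w - p k‖ ^ 2 = c * (1 + ∑ j, ‖w - a j‖ ^ 2) :=
    sum_mul_norm_sub_sq_eq ha hpa h w
  have hrow (k : Fin 3) : ∑ l, α l * ‖p k - p l‖ ^ 2 = c * (1 + Fintype.card ι) := by
    simp [hweight, hpa]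
  have hα : α ≠ 0 := by
    rintro rfl
    have hc0 : c * (1 + Fintype.card ι) = 0 := by simpa using (hrow 0).symm
    have : c = 0 := (mul_eq_zero.1 hc0).resolve_right (by positivity)
    exact hne (Prod.ext rfl (funext fun j => (hy j).trans this))
  obtain ⟨i, hpos, hc_pos⟩ := exists_forall_ne_pos (D := fun k l => ‖p k - p l‖ ^ 2)
    (by simp) (fun k l hkl => by have := sub_ne_zero.2 (hp.ne hkl); positivity)
    (fun k l => pow_le_one₀ (norm_nonneg _) (hp1 k l)) hpow (Nat.cast_nonneg _) hα_sum hrow hα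
  refine ⟨i, fun w hw hwi => ?_⟩
  have hle : ∑ k, α k * ‖w - p k‖ ^ 2 ≤ ∑ k, α k := by
    refine sum_le_sum fun k _ => ?_
    by_cases hki : k = i
    · simp [hki, hwi]
    · exact mul_le_of_le_one_right (hpos k hki).le (pow_le_one₀ (norm_nonneg _) (hw k))
  rw [hweight, hα_sum, mul_comm (_ : ℝ) c] at hle
  linarith [le_of_mul_le_mul_left hle hc_pos]

end AffineRelations

theorem finrank_le_finrank_inf_ker_add_one {V : Type*} [AddCommGroup V] [Module ℝ V]
    [FiniteDimensional ℝ V] (L : Submodule ℝ V) (f : V →ₗ[ℝ] ℝ) :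
    Module.finrank ℝ L ≤ Module.finrank ℝ (L ⊓ LinearMap.ker f : Submodule ℝ V) + 1 := by
  have hinf := Submodule.finrank_sup_add_finrank_inf_eq L (LinearMap.ker f)
  have hsup := Submodule.finrank_le (L ⊔ LinearMap.ker f)
  have hker := f.finrank_range_add_finrank_ker
  have hrange := Submodule.finrank_le (LinearMap.range f)
  rw [Module.finrank_self] at hrange
  omega

section QuadraticForm

open Matrix

variable {τ : Type*} [Fintype τ] {S : Matrix τ τ ℝ}

theorem mulVec_eq_smul_of_forall_dotProduct_mulVec_le (hS : S.IsSymm) {s : ℝ}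
    (hle : ∀ z, z ⬝ᵥ S *ᵥ z ≤ s * (z ⬝ᵥ z)) {z : τ → ℝ} (hz : s * (z ⬝ᵥ z) ≤ z ⬝ᵥ S *ᵥ z) :
    S *ᵥ z = s • z := by
  have happly (z : τ → ℝ) : (s • (1 : Matrix τ τ ℝ) - S) *ᵥ z = s • z - S *ᵥ z := by
    rw [sub_mulVec, smul_mulVec, one_mulVec]
  have hpsd : (s • (1 : Matrix τ τ ℝ) - S).PosSemidef := by
    refine .of_dotProduct_mulVec_nonneg ?_ fun z => ?_
    · exact (isSymm_one.smul s).sub hS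
    · rw [happly, star_trivial, dotProduct_sub, dotProduct_smul, smul_eq_mul]
      exact sub_nonneg.2 (hle z)
  have hzero : z ⬝ᵥ (s • (1 : Matrix τ τ ℝ) - S) *ᵥ z = 0 := by
    rw [happly, dotProduct_sub, dotProduct_smul, smul_eq_mul]
    linarith [hle z]
  have := (hpsd.dotProduct_mulVec_zero_iff z).1 (by rwa [star_trivial])
  rw [happly] at this
  exact (sub_eq_zero.1 this).symm

theorem exists_forall_dotProduct_mulVec_le [Nonempty τ] (S : Matrix τ τ ℝ) :
    ∃ w : τ → ℝ, w ⬝ᵥ w = 1 ∧ ∀ z, z ⬝ᵥ S *ᵥ z ≤ (w ⬝ᵥ S *ᵥ w) * (z ⬝ᵥ z) := by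
  have hnorm (x : EuclideanSpace ℝ τ) : x.ofLp ⬝ᵥ x.ofLp = ‖x‖ ^ 2 := by
    rw [EuclideanSpace.real_norm_sq_eq, dotProduct]
    exact sum_congr rfl fun i _ => (sq _).symm
  have hcont : Continuous fun x : EuclideanSpace ℝ τ => x.ofLp ⬝ᵥ S *ᵥ x.ofLp := by
    fun_prop
  obtain ⟨x, hx, hmax⟩ := (isCompact_sphere (0 : EuclideanSpace ℝ τ) 1).exists_isMaxOn
    (NormedSpace.sphere_nonempty.2 zero_le_one) hcont.continuousOn
  rw [mem_sphere_zero_iff_norm] at hx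
  refine ⟨x.ofLp, by rw [hnorm, hx, one_pow], fun z => ?_⟩
  obtain rfl | hz := eq_or_ne z 0
  · simp
  have hz' : WithLp.toLp 2 z ≠ 0 := mt (WithLp.toLp_eq_zero 2).1 hz
  have hr : ‖WithLp.toLp 2 z‖ ≠ 0 := norm_ne_zero_iff.2 hz'
  have hle := hmax (mem_sphere_zero_iff_norm.2 (norm_smul_inv_norm (𝕜 := ℝ) hz'))
  set r := ‖WithLp.toLp 2 z‖ with hr_def
  simp only [Set.mem_ofPred_eq, RCLike.ofReal_real_eq_id, id, WithLp.ofLp_smul, mulVec_smul,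
    smul_dotProduct, dotProduct_smul, smul_eq_mul] at hle
  calc z ⬝ᵥ S *ᵥ z = r⁻¹ * (r⁻¹ * (z ⬝ᵥ S *ᵥ z)) * r ^ 2 := by field_simp
    _ ≤ x.ofLp ⬝ᵥ S *ᵥ x.ofLp * r ^ 2 := by gcongr
    _ = x.ofLp ⬝ᵥ S *ᵥ x.ofLp * (z ⬝ᵥ z) := by rw [hr_def, ← hnorm]

theorem dotProduct_mulVec_le_abs (hS : ∀ i j, 0 ≤ S i j) (z : τ → ℝ) :
    z ⬝ᵥ S *ᵥ z ≤ |z| ⬝ᵥ S *ᵥ |z| := by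
  simp_rw [dotProduct, mulVec, dotProduct, mul_sum]
  refine sum_le_sum fun i _ => sum_le_sum fun j _ => ?_
  calc z i * (S i j * z j) ≤ |z i * (S i j * z j)| := le_abs_self _
    _ = |z| i * (S i j * |z| j) := by rw [abs_mul, abs_mul, abs_of_nonneg (hS i j)]; rfl

theorem exists_nonneg_eigenvector (hS : S.IsSymm) (hS0 : ∀ i j, 0 ≤ S i j) {z : τ → ℝ}
    (hz : z ⬝ᵥ z < z ⬝ᵥ S *ᵥ z) : ∃ s : ℝ, 1 < s ∧ ∃ w, 0 ≤ w ∧ w ≠ 0 ∧ S *ᵥ w = s • w := by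
  have hz0 : z ≠ 0 := by
    rintro rfl
    simp at hz
  have : Nonempty τ := (Function.ne_iff.1 hz0).nonempty
  obtain ⟨w, hw, hmax⟩ := exists_forall_dotProduct_mulVec_le S
  have habs : |w| ⬝ᵥ |w| = w ⬝ᵥ w := sum_congr rfl fun i _ => abs_mul_abs_self (w i)
  refine ⟨w ⬝ᵥ S *ᵥ w, ?_, |w|, abs_nonneg w, ?_, ?_⟩
  · by_contra! hle
    exact hz.not_ge ((hmax z).trans (mul_le_of_le_one_left (dotProduct_self_star_nonneg z) hle))
  · rintro h
    simp [← habs, h] at hw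
  · refine mulVec_eq_smul_of_forall_dotProduct_mulVec_le hS hmax ?_
    rw [habs, hw, mul_one]
    exact dotProduct_mulVec_le_abs hS0 w

theorem posPart_dotProduct_self_eq (z : τ → ℝ) : z⁺ ⬝ᵥ z⁺ = z⁺ ⬝ᵥ z := by
  refine sum_congr rfl fun i _ => ?_
  rw [Pi.posPart_apply]
  obtain h | h := le_total 0 (z i)
  · rw [posPart_of_nonneg h]
  · rw [posPart_of_nonpos h, zero_mul, zero_mul]

theorem posPart_dotProduct_self_le (hS0 : ∀ i j, 0 ≤ S i j) {z : τ → ℝ} (hz : S *ᵥ z = z) :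
    z⁺ ⬝ᵥ z⁺ ≤ z⁺ ⬝ᵥ S *ᵥ z⁺ := by
  have hle : z ≤ S *ᵥ z⁺ := by
    conv_lhs => rw [← hz]
    exact fun i => dotProduct_le_dotProduct_of_nonneg_left (le_posPart z) (hS0 i)
  rw [posPart_dotProduct_self_eq]
  exact dotProduct_le_dotProduct_of_nonneg_left hle (posPart_nonneg z)

theorem mulVec_posPart_eq (hS : S.IsSymm) (hS0 : ∀ i j, 0 ≤ S i j)
    (hle : ∀ z, z ⬝ᵥ S *ᵥ z ≤ z ⬝ᵥ z) {z : τ → ℝ} (hz : S *ᵥ z = z) : S *ᵥ z⁺ = z⁺ := by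
  simpa using mulVec_eq_smul_of_forall_dotProduct_mulVec_le hS (s := 1) (by simpa using hle)
    (by simpa using posPart_dotProduct_self_le hS0 hz)

/-- Otherwise the combination of `z⁺` and `w` orthogonal to `c` would violate `hc`. -/
theorem dotProduct_posPart_nonneg (hS : S.IsSymm) (hS0 : ∀ i j, 0 ≤ S i j) {c w z : τ → ℝ} {s : ℝ}
    (hc : ∀ y, c ⬝ᵥ y = 0 → y ⬝ᵥ S *ᵥ y ≤ y ⬝ᵥ y) (hs : 1 < s) (hw : 0 ≤ w)
    (hSw : S *ᵥ w = s • w) (hcw : 0 < c ⬝ᵥ w) (hz : S *ᵥ z = z) : 0 ≤ c ⬝ᵥ z⁺ := by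
  by_contra! hneg
  have hcy : c ⬝ᵥ ((c ⬝ᵥ w) • z⁺ - (c ⬝ᵥ z⁺) • w) = 0 := by
    simp only [dotProduct_sub, dotProduct_smul, smul_eq_mul]
    ring
  have hsymm : w ⬝ᵥ S *ᵥ z⁺ = s * (z⁺ ⬝ᵥ w) := by
    rw [dotProduct_mulVec, ← mulVec_transpose, hS.eq, hSw, smul_dotProduct, smul_eq_mul,
      dotProduct_comm]
  have hle := hc _ hcy
  simp only [mulVec_sub, mulVec_smul, sub_dotProduct, dotProduct_sub, smul_dotProduct,
    dotProduct_smul, smul_eq_mul, hSw, hsymm, dotProduct_comm w z⁺] at hle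
  have hzz := posPart_dotProduct_self_le hS0 hz
  have hzw : 0 ≤ z⁺ ⬝ᵥ w := dotProduct_nonneg_of_nonneg (posPart_nonneg z) hw
  have hww : 0 < w ⬝ᵥ w := dotProduct_self_star_pos_iff.2 fun h => by simp [h] at hcw
  have h₁ : 0 ≤ (c ⬝ᵥ w) ^ 2 * (z⁺ ⬝ᵥ S *ᵥ z⁺ - z⁺ ⬝ᵥ z⁺) :=
    mul_nonneg (sq_nonneg _) (sub_nonneg.2 hzz)
  have h₂ : 0 ≤ (c ⬝ᵥ w) * -(c ⬝ᵥ z⁺) * ((s - 1) * (z⁺ ⬝ᵥ w)) :=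
    mul_nonneg (mul_pos hcw (neg_pos.2 hneg)).le (mul_nonneg (sub_pos.2 hs).le hzw)
  have h₃ : 0 < (c ⬝ᵥ z⁺) ^ 2 * ((s - 1) * (w ⬝ᵥ w)) :=
    mul_pos (sq_pos_of_neg hneg) (mul_pos (sub_pos.2 hs) hww)
  linarith

end QuadraticForm

section Rows

open Matrix

variable {ι κ : Type*} [Fintype κ] {F : Matrix ι κ ℝ}

theorem exists_apply_eq_one_of_sum_posPart_le (hF0 : ∀ i j, 0 ≤ F i j) (hF1 : ∀ i j, F i j ≤ 1)
    {y : κ → ℝ} {i : ι} (hpos : 0 < (F *ᵥ y) i) (hle : ∑ j, y⁺ j ≤ (F *ᵥ y) i) :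
    ∃ j, F i j = 1 := by
  by_contra! hne
  have hmono : (F *ᵥ y) i ≤ ∑ j, F i j * y⁺ j :=
    dotProduct_le_dotProduct_of_nonneg_left (le_posPart y) (hF0 i)
  obtain ⟨j, -, hj⟩ := exists_lt_of_sum_lt
    (s := univ) (f := fun _ => (0 : ℝ)) (by simpa using hpos.trans_le hmono)
  have hyj : 0 < y⁺ j := pos_of_mul_pos_right hj (hF0 i j)
  refine (hle.trans hmono).not_gt (sum_lt_sum (fun k _ => ?_) ⟨j, mem_univ j, ?_⟩)
  · exact mul_le_of_le_one_left (posPart_nonneg y k) (hF1 i k)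
  · exact mul_lt_of_lt_one_left hyj ((hF1 i j).lt_of_ne (hne j))

variable [Fintype ι]

theorem card_pos_le_one_of_dotProduct_eq_zero {u x : ι → ℝ} (hu : 0 ≤ u) (hx : 0 ≤ x)
    (hux : u ⬝ᵥ x = 0) {J : Finset ι} (hJ : #J = 3) (hxJ : ∀ q ∉ J, x q = 0)
    (hpos : ∃ l ∈ J, ∃ l' ∈ J, l ≠ l' ∧ 0 < u l ∧ 0 < u l') : #{q | 0 < x q} ≤ 1 := by
  obtain ⟨l, hl, l', hl', hne, hul, hul'⟩ := hpos
  have hzero (q : ι) : u q * x q = 0 :=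
    (sum_eq_zero_iff_of_nonneg fun q _ => mul_nonneg (hu q) (hx q)).1 hux q (mem_univ q)
  have hxl : x l = 0 := (mul_eq_zero.1 (hzero l)).resolve_left hul.ne'
  have hxl' : x l' = 0 := (mul_eq_zero.1 (hzero l')).resolve_left hul'.ne'
  have hsub : ({q | 0 < x q} : Finset ι) ⊆ (J.erase l).erase l' := by
    intro q hq
    have hq := (mem_filter.1 hq).2.ne'
    refine mem_erase.2 ⟨fun h => hq (h ▸ hxl'), mem_erase.2 ⟨fun h => hq (h ▸ hxl), ?_⟩⟩
    exact by_contra fun h => hq (hxJ q h)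
  have := card_le_card hsub
  rwa [card_erase_of_mem (mem_erase.2 ⟨hne.symm, hl'⟩), card_erase_of_mem hl, hJ] at this

theorem card_pos_eq_one_or_card_neg_eq_one {u x : ι → ℝ} (hu : 0 ≤ u) (hx : x ≠ 0)
    (hux : u ⬝ᵥ x = 0) {J : Finset ι} (hJ : #J = 3) (hxJ : ∀ q ∉ J, x q = 0)
    (hpos : ∃ l ∈ J, ∃ l' ∈ J, l ≠ l' ∧ 0 < u l ∧ 0 < u l') :
    #{q | 0 < x q} = 1 ∨ #{q | x q < 0} = 1 := by
  have hcard : #{q | 0 < x q} + #{q | x q < 0} ≤ 3 := by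
    rw [← hJ, ← card_union_of_disjoint
      (disjoint_filter.2 fun q _ h => h.le.not_gt)]
    refine card_le_card fun q hq => by_contra fun hqJ => ?_
    simp [hxJ q hqJ] at hq
  have hnonzero : #{q | 0 < x q} ≠ 0 ∨ #{q | x q < 0} ≠ 0 := by
    obtain ⟨q, hq⟩ := Function.ne_iff.1 hx
    exact (hq.lt_or_gt).symm.imp (fun h => card_ne_zero_of_mem (mem_filter.2 ⟨mem_univ q, h⟩))
      fun h => card_ne_zero_of_mem (mem_filter.2 ⟨mem_univ q, h⟩)
  by_cases hneg : #{q | x q < 0} = 0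
  · have hx0 : 0 ≤ x := fun q => not_lt.1 (filter_eq_empty_iff.1 (card_eq_zero.1 hneg) (mem_univ q))
    have := card_pos_le_one_of_dotProduct_eq_zero hu hx0 hux hJ hxJ hpos
    omega
  by_cases hpos' : #{q | 0 < x q} = 0
  · have hx0 : 0 ≤ -x := fun q => neg_nonneg.2
      (not_lt.1 (filter_eq_empty_iff.1 (card_eq_zero.1 hpos') (mem_univ q)))
    have := card_pos_le_one_of_dotProduct_eq_zero hu hx0 (by rw [dotProduct_neg, hux, neg_zero]) hJ
      (fun q hq => by rw [Pi.neg_apply, hxJ q hq, neg_zero]) hpos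
    simp only [Pi.neg_apply, neg_pos] at this
    omega
  omega

theorem exists_mem_ne_zero_of_card_lt {L : Submodule ℝ (ι → ℝ)} {J : Finset ι}
    (hJ : Fintype.card ι < Module.finrank ℝ L + #J) : ∃ x ∈ L, x ≠ 0 ∧ ∀ q ∉ J, x q = 0 := by
  let f : L →ₗ[ℝ] ({q // q ∉ J} → ℝ) := (LinearMap.funLeft ℝ ℝ Subtype.val).comp L.subtype
  have hker : LinearMap.ker f ≠ ⊥ := by
    refine LinearMap.ker_ne_bot_of_finrank_lt ?_
    rw [Module.finrank_fintype_fun_eq_card, Fintype.card_subtype_compl, Fintype.card_coe]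
    have := card_le_univ J
    omega
  obtain ⟨x, hx, hx0⟩ := (Submodule.ne_bot_iff _).1 hker
  exact ⟨x, x.2, fun h => hx0 (Subtype.ext h),
    fun q hq => congr_fun (LinearMap.mem_ker.1 hx) ⟨q, hq⟩⟩

theorem exists_apply_eq_one_of_card_pos_eq_one (hF0 : ∀ i j, 0 ≤ F i j) (hF1 : ∀ i j, F i j ≤ 1)
    {x : ι → ℝ} (hx : F *ᵥ (x ᵥ* F) = x) (hle : ∑ j, (x ᵥ* F)⁺ j ≤ ∑ i, x⁺ i)
    (hcard : #{q | 0 < x q} = 1) : ∃ p, x p ≠ 0 ∧ ∃ j, F p j = 1 := by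
  obtain ⟨p, hp⟩ := card_eq_one.1 hcard
  have hmem (q : ι) : 0 < x q ↔ q = p := by
    simpa using congr_arg (q ∈ ·) hp
  have hpos : 0 < x p := (hmem p).2 rfl
  refine ⟨p, hpos.ne', exists_apply_eq_one_of_sum_posPart_le hF0 hF1 (y := x ᵥ* F) ?_ ?_⟩
  · rwa [hx]
  · rw [hx, ← posPart_of_nonneg hpos.le]
    refine hle.trans_eq (Fintype.sum_eq_single p fun q hq => ?_)
    exact posPart_of_nonpos (not_lt.1 (mt (hmem q).1 hq))

/-- If three rows contained no `1`, then `L` would contain a nonzero vector supported on them; one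
of its signs occurs only once, which forces a `1` in the row where it occurs. -/
theorem card_le_card_exists_apply_eq_one_add_two (hF0 : ∀ i j, 0 ≤ F i j) (hF1 : ∀ i j, F i j ≤ 1)
    {u : ι → ℝ} (hu : 0 ≤ u) {L : Submodule ℝ (ι → ℝ)}
    (hL : Fintype.card ι ≤ Module.finrank ℝ L + 2)
    (hfix : ∀ x ∈ L, F *ᵥ (x ᵥ* F) = x) (hux : ∀ x ∈ L, u ⬝ᵥ x = 0)
    (hpos : ∀ x ∈ L, ∑ j, (x ᵥ* F)⁺ j ≤ ∑ i, x⁺ i)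
    (hu_pos : 3 ≤ #{p | ∀ j, F p j ≠ 1} →
      ∃ l l', l ≠ l' ∧ (∀ j, F l j ≠ 1) ∧ (∀ j, F l' j ≠ 1) ∧ 0 < u l ∧ 0 < u l') :
    Fintype.card ι ≤ #{p | ∃ j, F p j = 1} + 2 := by
  by_contra! hlt
  have hunmatched : 3 ≤ #{p | ∀ j, F p j ≠ 1} := by
    have := card_filter_add_card_filter_not (s := (univ : Finset ι)) fun p => ∃ j, F p j = 1
    simp only [not_exists, card_univ, ← ne_eq] at this
    omega
  obtain ⟨l, l', hne, hl, hl', hul, hul'⟩ := hu_pos hunmatched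
  obtain ⟨J, hlJ, hJ, hJcard⟩ := exists_subsuperset_card_eq
    (s := {l, l'}) (t := {p | ∀ j, F p j ≠ 1}) (n := 3)
    (by simp [insert_subset_iff, hl, hl']) (by rw [card_pair hne]; norm_num) hunmatched
  obtain ⟨x, hxL, hx0, hxJ⟩ := exists_mem_ne_zero_of_card_lt (L := L) (J := J) (by omega)
  obtain ⟨p, hp, j, hj⟩ : ∃ p, x p ≠ 0 ∧ ∃ j, F p j = 1 := by
    obtain h | h := card_pos_eq_one_or_card_neg_eq_one hu hx0 (hux x hxL) hJcard hxJ
      ⟨l, hlJ (by simp), l', hlJ (by simp), hne, hul, hul'⟩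
    · exact exists_apply_eq_one_of_card_pos_eq_one hF0 hF1 (hfix x hxL) (hpos x hxL) h
    · have hxL' := L.neg_mem hxL
      simpa using exists_apply_eq_one_of_card_pos_eq_one hF0 hF1 (hfix _ hxL') (hpos _ hxL')
        (by simpa using h)
  exact (mem_filter.1 (hJ (by_contra fun h => hp (hxJ p h)))).2 j hj

end Rows

section Bipartite

open Matrix

variable {ι κ : Type*} {F : Matrix ι κ ℝ}

theorem posPart_sumElim (x : ι → ℝ) (y : κ → ℝ) : (Sum.elim x y)⁺ = Sum.elim x⁺ y⁺ := by
  ext (i | j) <;> rfl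

/-- The adjacency matrix of the weighted bipartite graph with biadjacency matrix `F`; its
eigenvectors for the eigenvalue `s` are the pairs of singular vectors of `F` for the singular
value `s`. -/
def bipartite (F : Matrix ι κ ℝ) : Matrix (ι ⊕ κ) (ι ⊕ κ) ℝ :=
  fromBlocks 0 F Fᵀ 0

theorem isSymm_bipartite (F : Matrix ι κ ℝ) : (bipartite F).IsSymm :=
  .fromBlocks isSymm_zero rfl isSymm_zero

theorem bipartite_nonneg (hF0 : ∀ i j, 0 ≤ F i j) : ∀ i j, 0 ≤ bipartite F i j := by
  rintro (i | i) (j | j)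
  exacts [le_rfl, hF0 i j, hF0 j i, le_rfl]

theorem finrank_map_fst_eq [Fintype ι] {W : Submodule ℝ ((ι → ℝ) × (κ → ℝ))}
    (hW : ∀ z ∈ W, z.1 ᵥ* F = z.2) :
    Module.finrank ℝ (W.map (LinearMap.fst ℝ (ι → ℝ) (κ → ℝ))) = Module.finrank ℝ W := by
  rw [← LinearMap.range_domRestrict]
  refine LinearMap.finrank_range_of_inj fun z w hzw => Subtype.ext (Prod.ext hzw ?_)
  rw [← hW z z.2, ← hW w w.2]
  exact congr_arg (· ᵥ* F) hzw

variable [Fintype ι] [Fintype κ]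

theorem bipartite_mulVec (F : Matrix ι κ ℝ) (x : ι → ℝ) (y : κ → ℝ) :
    bipartite F *ᵥ Sum.elim x y = Sum.elim (F *ᵥ y) (x ᵥ* F) := by
  simp [bipartite, fromBlocks_mulVec, mulVec_transpose, Sum.elim_comp_inl, Sum.elim_comp_inr]

theorem bipartite_mulVec_eq_smul_iff {x : ι → ℝ} {y : κ → ℝ} {s : ℝ} :
    bipartite F *ᵥ Sum.elim x y = s • Sum.elim x y ↔ F *ᵥ y = s • x ∧ x ᵥ* F = s • y := by
  have hsmul : s • Sum.elim x y = Sum.elim (s • x) (s • y) := by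
    ext (i | j) <;> rfl
  rw [bipartite_mulVec, hsmul, Sum.elim_eq_iff]

theorem dotProduct_bipartite_mulVec (F : Matrix ι κ ℝ) (x : ι → ℝ) (y : κ → ℝ) :
    Sum.elim x y ⬝ᵥ bipartite F *ᵥ Sum.elim x y = 2 * (x ⬝ᵥ F *ᵥ y) := by
  rw [bipartite_mulVec, sumElim_dotProduct_sumElim, dotProduct_comm y, ← dotProduct_mulVec, two_mul]

theorem dotProduct_bipartite_mulVec_le (hle : ∀ x y, 2 * (x ⬝ᵥ F *ᵥ y) ≤ x ⬝ᵥ x + y ⬝ᵥ y)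
    (z : ι ⊕ κ → ℝ) : z ⬝ᵥ bipartite F *ᵥ z ≤ z ⬝ᵥ z := by
  obtain ⟨⟨x, y⟩, rfl⟩ := (Equiv.sumArrowEquivProdArrow ι κ ℝ).symm.surjective z
  exact (dotProduct_bipartite_mulVec F x y).trans_le
    ((hle x y).trans_eq (sumElim_dotProduct_sumElim x x y y).symm)

theorem bipartite_mulVec_eq_self {x : ι → ℝ} (hx : F *ᵥ (x ᵥ* F) = x) :
    bipartite F *ᵥ Sum.elim x (x ᵥ* F) = Sum.elim x (x ᵥ* F) := by
  rw [bipartite_mulVec, hx]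

theorem mulVec_vecMul_eq_of_le_two_mul (hle : ∀ x y, 2 * (x ⬝ᵥ F *ᵥ y) ≤ x ⬝ᵥ x + y ⬝ᵥ y)
    {x : ι → ℝ} {y : κ → ℝ} (hxy : x ⬝ᵥ x + y ⬝ᵥ y ≤ 2 * (x ⬝ᵥ F *ᵥ y)) :
    F *ᵥ y = x ∧ x ᵥ* F = y := by
  have := mulVec_eq_smul_of_forall_dotProduct_mulVec_le (isSymm_bipartite F) (s := 1)
    (z := Sum.elim x y) (by simpa using dotProduct_bipartite_mulVec_le hle)
    (by rwa [one_mul, dotProduct_bipartite_mulVec, sumElim_dotProduct_sumElim])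
  simpa using bipartite_mulVec_eq_smul_iff.1 this

theorem mulVec_vecMul_posPart_eq (hF0 : ∀ i j, 0 ≤ F i j)
    (hle : ∀ x y, 2 * (x ⬝ᵥ F *ᵥ y) ≤ x ⬝ᵥ x + y ⬝ᵥ y) {x : ι → ℝ} (hx : F *ᵥ (x ᵥ* F) = x) :
    F *ᵥ (x ᵥ* F)⁺ = x⁺ ∧ x⁺ ᵥ* F = (x ᵥ* F)⁺ := by
  have := mulVec_posPart_eq (isSymm_bipartite F) (bipartite_nonneg hF0)
    (dotProduct_bipartite_mulVec_le hle) (bipartite_mulVec_eq_self hx)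
  rwa [posPart_sumElim, bipartite_mulVec, Sum.elim_eq_iff] at this

theorem sum_vecMul_eq_sum_of_mul_transpose_eq_one (hcard : Fintype.card ι = Fintype.card κ)
    (hF0 : ∀ i j, 0 ≤ F i j) (hF1 : ∀ i j, F i j ≤ 1) (hF : F * Fᵀ = 1) (x : ι → ℝ) :
    ∑ j, (x ᵥ* F) j = ∑ i, x i := by
  have hrow_le (i : ι) : 1 ≤ (F *ᵥ 1) i := by
    calc (1 : ℝ) = (F * Fᵀ) i i := by rw [hF, one_apply_eq]
      _ ≤ (F *ᵥ 1) i := sum_le_sum fun j _ => mul_le_mul_of_nonneg_left (hF1 i j) (hF0 i j)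
  have hrow_sq : ∑ i, (F *ᵥ 1) i * (F *ᵥ 1) i = ∑ i : ι, 1 := by
    calc (F *ᵥ 1) ⬝ᵥ (F *ᵥ 1) = 1 ⬝ᵥ (Fᵀ * F) *ᵥ 1 := by
          rw [← mulVec_mulVec, dotProduct_comm, dotProduct_mulVec, ← mulVec_transpose,
            dotProduct_comm]
      _ = ∑ i : ι, 1 := by simp [(mul_eq_one_comm_of_card_eq (R := ℝ) (eq := hcard)).1 hF, hcard]
  have hrow : F *ᵥ 1 = 1 := by
    refine funext fun i => le_antisymm ?_ (hrow_le i)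
    have := (sum_eq_sum_iff_of_le fun i _ => one_le_mul_of_one_le_of_one_le
      (hrow_le i) (hrow_le i)).1 hrow_sq.symm i (mem_univ i)
    exact (le_mul_of_one_le_right (zero_le_one.trans (hrow_le i)) (hrow_le i)).trans_eq this.symm
  rw [← dotProduct_one, ← dotProduct_mulVec, hrow, dotProduct_one]

/-- Either the fixed space of `F Fᵀ` is `L`, or `F` is orthogonal. -/
theorem sum_vecMul_eq_sum_of_mulVec_vecMul_eq (hcard : Fintype.card ι = Fintype.card κ)
    (hF0 : ∀ i j, 0 ≤ F i j) (hF1 : ∀ i j, F i j ≤ 1) {L : Submodule ℝ (ι → ℝ)}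
    (hL : Fintype.card ι ≤ Module.finrank ℝ L + 1)
    (hfix : ∀ x ∈ L, F *ᵥ (x ᵥ* F) = x) (hsum : ∀ x ∈ L, ∑ j, (x ᵥ* F) j = ∑ i, x i)
    {x : ι → ℝ} (hx : F *ᵥ (x ᵥ* F) = x) : ∑ j, (x ᵥ* F) j = ∑ i, x i := by
  have hmem (x : ι → ℝ) : x ∈ LinearMap.ker (F * Fᵀ - 1).mulVecLin ↔ F *ᵥ (x ᵥ* F) = x := by
    rw [LinearMap.mem_ker, mulVecLin_apply, sub_mulVec, one_mulVec, sub_eq_zero, ← mulVec_mulVec,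
      mulVec_transpose]
  have hle : L ≤ LinearMap.ker (F * Fᵀ - 1).mulVecLin := fun x hx => (hmem x).2 (hfix x hx)
  obtain h | h := hle.eq_or_lt
  · exact hsum x (h ▸ (hmem x).2 hx)
  · have htop : LinearMap.ker (F * Fᵀ - 1).mulVecLin = ⊤ := by
      refine Submodule.eq_top_of_finrank_eq
        ((Submodule.finrank_le _).antisymm ?_)
      have := Submodule.finrank_lt_finrank_of_lt h
      rw [Module.finrank_fintype_fun_eq_card]
      omega
    refine sum_vecMul_eq_sum_of_mul_transpose_eq_one hcard hF0 hF1 (sub_eq_zero.1 ?_) x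
    rwa [LinearMap.ker_eq_top, ← toLin'_apply', LinearEquiv.map_eq_zero_iff] at htop

theorem card_le_of_forall_two_mul_dotProduct_mulVec_le (hcard : Fintype.card ι = Fintype.card κ)
    (hF0 : ∀ i j, 0 ≤ F i j) (hF1 : ∀ i j, F i j ≤ 1)
    (hle : ∀ x y, 2 * (x ⬝ᵥ F *ᵥ y) ≤ x ⬝ᵥ x + y ⬝ᵥ y) {L : Submodule ℝ (ι → ℝ)}
    (hL : Fintype.card ι ≤ Module.finrank ℝ L + 1)
    (hfix : ∀ x ∈ L, F *ᵥ (x ᵥ* F) = x) (hsum : ∀ x ∈ L, ∑ j, (x ᵥ* F) j = ∑ i, x i) :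
    Fintype.card ι ≤ #{p | ∃ j, F p j = 1} + 2 := by
  let σ : (ι → ℝ) →ₗ[ℝ] ℝ := Fintype.linearCombination ℝ fun _ => 1
  have hσ (x : ι → ℝ) : σ x = 1 ⬝ᵥ x := by simp [σ, Fintype.linearCombination_apply, one_dotProduct]
  have hrank := finrank_le_finrank_inf_ker_add_one L σ
  refine card_le_card_exists_apply_eq_one_add_two hF0 hF1 (u := 1) (L := L ⊓ LinearMap.ker σ)
    zero_le_one (by omega) (fun x hx => hfix x hx.1) (fun x hx => hσ x ▸ hx.2) (fun x hx => ?_) ?_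
  · obtain ⟨hFx, hxF⟩ := mulVec_vecMul_posPart_eq hF0 hle (hfix x hx.1)
    rw [← hxF] at hFx ⊢
    exact (sum_vecMul_eq_sum_of_mulVec_vecMul_eq hcard hF0 hF1 hL hfix hsum hFx).le
  · intro h
    obtain ⟨l, hl, l', hl', hne⟩ := one_lt_card.1 (by omega : 1 < #{p | ∀ j, F p j ≠ 1})
    exact ⟨l, l', hne, (mem_filter.1 hl).2, (mem_filter.1 hl').2, one_pos, one_pos⟩

theorem exists_singular_vectors (hF0 : ∀ i j, 0 ≤ F i j) {x : ι → ℝ} {y : κ → ℝ}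
    (hxy : x ⬝ᵥ x + y ⬝ᵥ y < 2 * (x ⬝ᵥ F *ᵥ y)) :
    ∃ s : ℝ, 1 < s ∧ ∃ u v, 0 ≤ u ∧ 0 ≤ v ∧ Sum.elim u v ≠ 0 ∧ F *ᵥ v = s • u ∧ u ᵥ* F = s • v := by
  obtain ⟨s, hs, w, hw, hw0, hSw⟩ := exists_nonneg_eigenvector (isSymm_bipartite F)
    (bipartite_nonneg hF0) (z := Sum.elim x y)
    (by rwa [dotProduct_bipartite_mulVec, sumElim_dotProduct_sumElim])
  obtain ⟨⟨u, v⟩, rfl⟩ := (Equiv.sumArrowEquivProdArrow ι κ ℝ).symm.surjective w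
  obtain ⟨hFv, huF⟩ := bipartite_mulVec_eq_smul_iff.1 hSw
  exact ⟨s, hs, u, v, fun i => hw (Sum.inl i), fun j => hw (Sum.inr j), hw0, hFv, huF⟩

section SingularVectors

variable {s : ℝ} {u : ι → ℝ} {v : κ → ℝ}

theorem dotProduct_self_eq_of_singular (hs : s ≠ 0) (hFv : F *ᵥ v = s • u) (huF : u ᵥ* F = s • v) :
    u ⬝ᵥ u = v ⬝ᵥ v := by
  have := dotProduct_mulVec u F v
  rw [hFv, huF, dotProduct_smul, smul_dotProduct] at this
  exact smul_right_injective ℝ hs this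

theorem dotProduct_eq_zero_of_singular (hs : 1 < s) (hFv : F *ᵥ v = s • u) (huF : u ᵥ* F = s • v)
    {x : ι → ℝ} (hx : F *ᵥ (x ᵥ* F) = x) : u ⬝ᵥ x = 0 := by
  have h₁ : u ⬝ᵥ x = s * (v ⬝ᵥ x ᵥ* F) := by
    rw [← smul_eq_mul, ← smul_dotProduct, ← huF, ← dotProduct_mulVec, hx]
  have h₂ : v ⬝ᵥ x ᵥ* F = s * (u ⬝ᵥ x) := by
    rw [← smul_eq_mul, ← smul_dotProduct, ← hFv, dotProduct_comm, ← dotProduct_mulVec,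
      dotProduct_comm]
  have h : (s ^ 2 - 1) * (u ⬝ᵥ x) = 0 := by linear_combination -h₁ - s * h₂
  exact (mul_eq_zero.1 h).resolve_left (sub_pos.2 (one_lt_pow₀ hs two_ne_zero)).ne'

theorem sum_ne_sum_of_singular
    (hbal : ∀ x y, ∑ i, x i = ∑ j, y j → 2 * (x ⬝ᵥ F *ᵥ y) ≤ x ⬝ᵥ x + y ⬝ᵥ y)
    (hs : 1 < s) (hFv : F *ᵥ v = s • u) (huF : u ᵥ* F = s • v) (huv : Sum.elim u v ≠ 0) :
    ∑ i, u i ≠ ∑ j, v j := by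
  intro hsum
  have hle := hbal u v hsum
  have heq := dotProduct_self_eq_of_singular (by positivity) hFv huF
  rw [hFv, dotProduct_smul, smul_eq_mul, ← heq] at hle
  have huu_nonneg : 0 ≤ u ⬝ᵥ u := sum_nonneg fun i _ => mul_self_nonneg (u i)
  have huu : u ⬝ᵥ u = 0 := by nlinarith
  have hu : u = 0 := dotProduct_self_eq_zero.1 huu
  have hv : v = 0 := dotProduct_self_eq_zero.1 (heq ▸ huu)
  exact huv (by rw [hu, hv, Sum.elim_zero_zero])

theorem sum_posPart_vecMul_le_of_singular (hF0 : ∀ i j, 0 ≤ F i j)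
    (hbal : ∀ x y, ∑ i, x i = ∑ j, y j → 2 * (x ⬝ᵥ F *ᵥ y) ≤ x ⬝ᵥ x + y ⬝ᵥ y)
    (hs : 1 < s) (hu : 0 ≤ u) (hv : 0 ≤ v) (hFv : F *ᵥ v = s • u) (huF : u ᵥ* F = s • v)
    (hlt : ∑ j, v j < ∑ i, u i) {x : ι → ℝ} (hx : F *ᵥ (x ᵥ* F) = x) :
    ∑ j, (x ᵥ* F)⁺ j ≤ ∑ i, x⁺ i := by
  have hdot (x : ι → ℝ) (y : κ → ℝ) : Sum.elim 1 (-1) ⬝ᵥ Sum.elim x y = ∑ i, x i - ∑ j, y j := by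
    rw [sumElim_dotProduct_sumElim, neg_dotProduct, one_dotProduct, one_dotProduct, sub_eq_add_neg]
  have hbal' (z : ι ⊕ κ → ℝ) (hz : Sum.elim 1 (-1) ⬝ᵥ z = 0) :
      z ⬝ᵥ bipartite F *ᵥ z ≤ z ⬝ᵥ z := by
    obtain ⟨⟨x, y⟩, rfl⟩ := (Equiv.sumArrowEquivProdArrow ι κ ℝ).symm.surjective z
    exact (dotProduct_bipartite_mulVec F x y).trans_le
      ((hbal x y (sub_eq_zero.1 ((hdot x y).symm.trans hz))).trans_eq
        (sumElim_dotProduct_sumElim x x y y).symm)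
  have huv0 : 0 ≤ Sum.elim u v := by
    rintro (i | j)
    exacts [hu i, hv j]
  have := dotProduct_posPart_nonneg (isSymm_bipartite F) (bipartite_nonneg hF0) hbal' hs huv0
    (bipartite_mulVec_eq_smul_iff.2 ⟨hFv, huF⟩) (by rw [hdot]; exact sub_pos.2 hlt)
    (bipartite_mulVec_eq_self hx)
  rwa [posPart_sumElim, hdot, sub_nonneg] at this

theorem exists_pos_pair_of_sum_lt_sum (hu : 0 ≤ u) (hv : 0 ≤ v) (huv : u ⬝ᵥ u = v ⬝ᵥ v)
    (hlt : ∑ j, v j < ∑ i, u i) : ∃ l l', l ≠ l' ∧ 0 < u l ∧ 0 < u l' := by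
  obtain ⟨l, -, hl⟩ := exists_lt_of_sum_lt (s := univ) (f := fun _ => (0 : ℝ))
    (by simpa using (sum_nonneg fun j _ => hv j).trans_lt hlt)
  by_contra! hle
  have hsingle : ∀ i ≠ l, u i = 0 := fun i hi => (hle l i hi.symm hl).antisymm (hu i)
  have hsum : ∑ i, u i = u l := Fintype.sum_eq_single l hsingle
  have hdot : u ⬝ᵥ u = u l * u l :=
    Fintype.sum_eq_single l fun i hi => by rw [hsingle i hi, zero_mul]
  have hsq : ∑ j, v j ^ 2 ≤ (∑ j, v j) ^ 2 := sum_sq_le_sq_sum_of_nonneg fun j _ => hv j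
  have hsq' : (∑ j, v j) ^ 2 < u l ^ 2 :=
    pow_lt_pow_left₀ (hsum ▸ hlt) (sum_nonneg fun j _ => hv j) two_ne_zero
  simp only [sq] at hsq hsq'
  exact (hsq.trans_lt hsq').ne (huv.symm.trans hdot)

theorem apply_ne_one_of_singular (hs : 1 < s) (hFv : F *ᵥ v = s • u) (huF : u ᵥ* F = s • v)
    (hone : ∀ i j, F i j = 1 → (∀ j' ≠ j, F i j' = 0) ∧ ∀ i' ≠ i, F i' j = 0) {i : ι}
    (hi : u i ≠ 0) (j : κ) : F i j ≠ 1 := by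
  intro hij
  obtain ⟨hrow, hcol⟩ := hone i j hij
  have h₁ : v j = s * u i := by
    rw [← smul_eq_mul, ← Pi.smul_apply, ← hFv, mulVec, dotProduct,
      Fintype.sum_eq_single j fun j' hj' => by rw [hrow j' hj', zero_mul], hij, one_mul]
  have h₂ : u i = s * v j := by
    rw [← smul_eq_mul, ← Pi.smul_apply, ← huF, vecMul, dotProduct,
      Fintype.sum_eq_single i fun i' hi' => by rw [hcol i' hi', mul_zero], hij, mul_one]
  have h : (s ^ 2 - 1) * u i = 0 := by linear_combination -h₂ - s * h₁
  exact hi ((mul_eq_zero.1 h).resolve_left (sub_pos.2 (one_lt_pow₀ hs two_ne_zero)).ne')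

theorem card_le_of_singular (hF0 : ∀ i j, 0 ≤ F i j) (hF1 : ∀ i j, F i j ≤ 1)
    (hone : ∀ i j, F i j = 1 → (∀ j' ≠ j, F i j' = 0) ∧ ∀ i' ≠ i, F i' j = 0)
    (hbal : ∀ x y, ∑ i, x i = ∑ j, y j → 2 * (x ⬝ᵥ F *ᵥ y) ≤ x ⬝ᵥ x + y ⬝ᵥ y)
    (hs : 1 < s) (hu : 0 ≤ u) (hv : 0 ≤ v) (hFv : F *ᵥ v = s • u) (huF : u ᵥ* F = s • v)
    (hlt : ∑ j, v j < ∑ i, u i) {L : Submodule ℝ (ι → ℝ)}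
    (hL : Fintype.card ι ≤ Module.finrank ℝ L + 2) (hfix : ∀ x ∈ L, F *ᵥ (x ᵥ* F) = x) :
    Fintype.card ι ≤ #{p | ∃ j, F p j = 1} + 2 := by
  refine card_le_card_exists_apply_eq_one_add_two hF0 hF1 hu hL hfix
    (fun x hx => dotProduct_eq_zero_of_singular hs hFv huF (hfix x hx))
    (fun x hx => sum_posPart_vecMul_le_of_singular hF0 hbal hs hu hv hFv huF hlt (hfix x hx))
    fun _ => ?_
  obtain ⟨l, l', hne, hl, hl'⟩ := exists_pos_pair_of_sum_lt_sum hu hv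
    (dotProduct_self_eq_of_singular (by positivity) hFv huF) hlt
  have hunmatched {i : ι} (hi : 0 < u i) := apply_ne_one_of_singular hs hFv huF hone hi.ne'
  exact ⟨l, l', hne, hunmatched hl, hunmatched hl', hl, hl'⟩

end SingularVectors

end Bipartite

section Proximity

open Matrix

variable {ι κ E : Type*} [NormedAddCommGroup E] {a : ι → E} {b : κ → E}

/-- The matrix of the numbers `1 - ‖a i - b j‖ ^ 2`. Between two families at mutual distances at
most one its entries lie in `[0, 1]`; they are `1` at coincidences and `0` at distance one. -/
def proximity (a : ι → E) (b : κ → E) : Matrix ι κ ℝ :=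
  .of fun i j => 1 - ‖a i - b j‖ ^ 2

theorem proximity_apply (a : ι → E) (b : κ → E) (i : ι) (j : κ) :
    proximity a b i j = 1 - ‖a i - b j‖ ^ 2 := rfl

theorem transpose_proximity (a : ι → E) (b : κ → E) : (proximity a b)ᵀ = proximity b a := by
  ext j i
  rw [transpose_apply, proximity_apply, proximity_apply, norm_sub_rev]

theorem proximity_nonneg (hab : ∀ i j, ‖a i - b j‖ ≤ 1) (i : ι) (j : κ) : 0 ≤ proximity a b i j :=
  sub_nonneg.2 (pow_le_one₀ (norm_nonneg _) (hab i j))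

theorem proximity_le_one (a : ι → E) (b : κ → E) (i : ι) (j : κ) : proximity a b i j ≤ 1 :=
  sub_le_self _ (sq_nonneg _)

theorem proximity_eq_one_iff {i : ι} {j : κ} : proximity a b i j = 1 ↔ a i = b j := by
  rw [proximity_apply, sub_eq_self, sq_eq_zero_iff, norm_eq_zero, sub_eq_zero]

theorem proximity_eq_zero_of_proximity_eq_one (ha : IsUnitSimplex a) (hb : IsUnitSimplex b)
    (i : ι) (j : κ) (hij : proximity a b i j = 1) :
    (∀ j' ≠ j, proximity a b i j' = 0) ∧ ∀ i' ≠ i, proximity a b i' j = 0 := by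
  rw [proximity_eq_one_iff] at hij
  refine ⟨fun j' hj' => ?_, fun i' hi' => ?_⟩
  · rw [proximity_apply, hij, hb hj'.symm, one_pow, sub_self]
  · rw [proximity_apply, ← hij, ha hi', one_pow, sub_self]

variable [Fintype κ]

theorem proximity_mulVec_apply (a : ι → E) (b : κ → E) (y : κ → ℝ) (i : ι) :
    (proximity a b *ᵥ y) i = ∑ j, y j - ∑ j, y j * ‖a i - b j‖ ^ 2 := by
  rw [mulVec, dotProduct, ← sum_sub_distrib]
  exact sum_congr rfl fun j _ => by rw [proximity_apply]; ring

variable [Fintype ι]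

theorem IsUnitSimplex.dotProduct_self_eq (ha : IsUnitSimplex a) (x : ι → ℝ) :
    x ⬝ᵥ x = (∑ i, x i) ^ 2 - ∑ i, x i * ∑ j, x j * ‖a i - a j‖ ^ 2 := by
  simp_rw [ha.sum_mul_norm_sub_sq, sq, sum_mul, ← sum_sub_distrib]
  exact sum_congr rfl fun i _ => by ring

variable [InnerProductSpace ℝ E]

theorem proximity_mulVec_eq (ha : IsUnitSimplex a) {x : ι → ℝ} {y : κ → ℝ}
    (h : (x, y) ∈ affineRelations a b) : proximity a b *ᵥ y = x + power a b (x, y) • 1 := by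
  ext i
  have hpow := sum_mul_norm_sub_sq_sub_eq_power h (a i)
  rw [ha.sum_mul_norm_sub_sq, (mem_affineRelations.1 h).1] at hpow
  rw [proximity_mulVec_apply, Pi.add_apply, Pi.smul_apply, Pi.one_apply, smul_eq_mul, mul_one,
    ← hpow]
  ring

theorem vecMul_proximity_eq (hb : IsUnitSimplex b) {x : ι → ℝ} {y : κ → ℝ}
    (h : (x, y) ∈ affineRelations a b) : x ᵥ* proximity a b = y - power a b (x, y) • 1 := by
  have hswap : (y, x) ∈ affineRelations b a :=
    mem_affineRelations.2 ((mem_affineRelations.1 h).imp Eq.symm Eq.symm)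
  have hpow : power b a (y, x) = -power a b (x, y) := by
    rw [power_apply, power_apply, neg_sub]
  rw [← mulVec_transpose, transpose_proximity, proximity_mulVec_eq hb hswap, hpow, neg_smul,
    sub_eq_add_neg]

theorem sum_mul_sum_mul_norm_sub_sq (a : ι → E) (b : κ → E) (x : ι → ℝ) (y : κ → ℝ) :
    ∑ i, x i * ∑ j, y j * ‖a i - b j‖ ^ 2 =
      (∑ j, y j) * ∑ i, x i * ‖a i‖ ^ 2 + (∑ i, x i) * ∑ j, y j * ‖b j‖ ^ 2
        - 2 * inner ℝ (∑ i, x i • a i) (∑ j, y j • b j) := by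
  have hinner : inner ℝ (∑ i, x i • a i) (∑ j, y j • b j) =
      ∑ i, x i * inner ℝ (a i) (∑ j, y j • b j) := by
    simp_rw [sum_inner, real_inner_smul_left]
  simp_rw [sum_mul_norm_sub_sq, hinner]
  generalize ∑ j, y j • b j = Y, ∑ j, y j = σ, ∑ j, y j * ‖b j‖ ^ 2 = q
  rw [mul_sum, sum_mul, mul_sum, ← sum_add_distrib, ← sum_sub_distrib]
  exact sum_congr rfl fun i _ => by ring

theorem two_mul_dotProduct_proximity_mulVec_le (ha : IsUnitSimplex a) (hb : IsUnitSimplex b)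
    (x : ι → ℝ) (y : κ → ℝ) (hxy : ∑ i, x i = ∑ j, y j) :
    2 * (x ⬝ᵥ proximity a b *ᵥ y) ≤ x ⬝ᵥ x + y ⬝ᵥ y := by
  have hdot : x ⬝ᵥ proximity a b *ᵥ y =
      (∑ j, y j) ^ 2 - ∑ i, x i * ∑ j, y j * ‖a i - b j‖ ^ 2 := by
    rw [sq]
    nth_rw 1 [← hxy]
    rw [sum_mul, ← sum_sub_distrib]
    exact sum_congr rfl fun i _ => by rw [proximity_mulVec_apply]; ring
  have hnorm : x ⬝ᵥ x + y ⬝ᵥ y - 2 * (x ⬝ᵥ proximity a b *ᵥ y) =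
      2 * ‖∑ i, x i • a i - ∑ j, y j • b j‖ ^ 2 := by
    rw [hdot, ha.dotProduct_self_eq, hb.dotProduct_self_eq, sum_mul_sum_mul_norm_sub_sq,
      sum_mul_sum_mul_norm_sub_sq, sum_mul_sum_mul_norm_sub_sq, hxy, norm_sub_sq_real,
      real_inner_self_eq_norm_sq, real_inner_self_eq_norm_sq]
    ring
  linarith [sq_nonneg ‖∑ i, x i • a i - ∑ j, y j • b j‖]

variable [FiniteDimensional ℝ E]

theorem card_le_of_singular_proximity (hE : Module.finrank ℝ E ≤ Fintype.card κ)
    (ha : IsUnitSimplex a) (hb : IsUnitSimplex b)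
    (hab : ∀ i j, ‖a i - b j‖ ≤ 1) {s : ℝ} {u : ι → ℝ} {v : κ → ℝ} (hs : 1 < s) (hu : 0 ≤ u)
    (hv : 0 ≤ v) (hFv : proximity a b *ᵥ v = s • u) (huF : u ᵥ* proximity a b = s • v)
    (hlt : ∑ j, v j < ∑ i, u i) : Fintype.card ι ≤ #{p | ∃ j, proximity a b p j = 1} + 2 := by
  set W := affineRelations a b ⊓ LinearMap.ker (power a b)
  have hW : ∀ z ∈ W, proximity a b *ᵥ z.2 = z.1 ∧ z.1 ᵥ* proximity a b = z.2 := by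
    rintro ⟨x, y⟩ ⟨h, hpow⟩
    rw [proximity_mulVec_eq ha h, vecMul_proximity_eq hb h, LinearMap.mem_ker.1 hpow]
    simp
  have hrank : Fintype.card ι ≤ Module.finrank ℝ W + 2 := by
    have := card_add_card_le_finrank_affineRelations a b
    have : Module.finrank ℝ (affineRelations a b) ≤ Module.finrank ℝ W + 1 :=
      finrank_le_finrank_inf_ker_add_one _ _
    omega
  refine card_le_of_singular (proximity_nonneg hab) (proximity_le_one a b)
    (proximity_eq_zero_of_proximity_eq_one ha hb) (two_mul_dotProduct_proximity_mulVec_le ha hb)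
    hs hu hv hFv huF hlt (L := W.map (LinearMap.fst ℝ _ _)) ?_ ?_
  · rwa [finrank_map_fst_eq fun z hz => (hW z hz).2]
  · rintro _ ⟨z, hz, rfl⟩
    rw [LinearMap.fst_apply, (hW z hz).2, (hW z hz).1]

theorem card_le_of_forall_two_mul_dotProduct_proximity_mulVec_le
    (hE : Module.finrank ℝ E ≤ Fintype.card κ) (hcard : Fintype.card ι = Fintype.card κ)
    (ha : IsUnitSimplex a) (hb : IsUnitSimplex b) (hab : ∀ i j, ‖a i - b j‖ ≤ 1)
    (hle : ∀ x y, 2 * (x ⬝ᵥ proximity a b *ᵥ y) ≤ x ⬝ᵥ x + y ⬝ᵥ y) :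
    Fintype.card ι ≤ #{p | ∃ j, proximity a b p j = 1} + 2 := by
  have hW : ∀ z ∈ affineRelations a b,
      proximity a b *ᵥ z.2 = z.1 ∧ z.1 ᵥ* proximity a b = z.2 := by
    rintro ⟨x, y⟩ h
    refine mulVec_vecMul_eq_of_le_two_mul hle (le_of_eq ?_)
    have h₁ : x ⬝ᵥ proximity a b *ᵥ y = x ⬝ᵥ x + power a b (x, y) * ∑ i, x i := by
      rw [proximity_mulVec_eq ha h, dotProduct_add, dotProduct_smul, dotProduct_one, smul_eq_mul]
    have h₂ : x ⬝ᵥ proximity a b *ᵥ y = y ⬝ᵥ y - power a b (x, y) * ∑ j, y j := by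
      rw [dotProduct_mulVec, vecMul_proximity_eq hb h, sub_dotProduct, smul_dotProduct,
        one_dotProduct, smul_eq_mul]
    rw [← (mem_affineRelations.1 h).1] at h₂
    linarith
  have hrank : Fintype.card ι ≤ Module.finrank ℝ (affineRelations a b) + 1 := by
    have := card_add_card_le_finrank_affineRelations a b
    omega
  refine card_le_of_forall_two_mul_dotProduct_mulVec_le hcard (proximity_nonneg hab)
    (proximity_le_one a b) hle (L := (affineRelations a b).map (LinearMap.fst ℝ _ _)) ?_ ?_ ?_
  · rwa [finrank_map_fst_eq fun z hz => (hW z hz).2]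
  · rintro _ ⟨z, hz, rfl⟩
    rw [LinearMap.fst_apply, (hW z hz).2, (hW z hz).1]
  · rintro _ ⟨z, hz, rfl⟩
    rw [LinearMap.fst_apply, (hW z hz).2, (mem_affineRelations.1 hz).1]

theorem card_le_card_exists_eq_add_two (hE : Module.finrank ℝ E ≤ Fintype.card ι)
    (hcard : Fintype.card ι = Fintype.card κ) (ha : IsUnitSimplex a) (hb : IsUnitSimplex b)
    (hab : ∀ i j, ‖a i - b j‖ ≤ 1) :
    Fintype.card ι ≤ #{i | ∃ j, a i = b j} + 2 ∨ Fintype.card κ ≤ #{j | ∃ i, a i = b j} + 2 := by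
  by_cases hle : ∀ x y, 2 * (x ⬝ᵥ proximity a b *ᵥ y) ≤ x ⬝ᵥ x + y ⬝ᵥ y
  · left
    simpa only [proximity_eq_one_iff] using card_le_of_forall_two_mul_dotProduct_proximity_mulVec_le
      (hcard ▸ hE) hcard ha hb hab hle
  push Not at hle
  obtain ⟨x, y, hxy⟩ := hle
  obtain ⟨s, hs, u, v, hu, hv, huv, hFv, huF⟩ := exists_singular_vectors (proximity_nonneg hab) hxy
  have hsum := sum_ne_sum_of_singular (two_mul_dotProduct_proximity_mulVec_le ha hb) hs hFv huF huv
  obtain hlt | hlt := hsum.lt_or_gt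
  · right
    have := card_le_of_singular_proximity hE hb ha
      (fun j i => (norm_sub_rev _ _).trans_le (hab i j)) hs hv hu
      (by rw [← transpose_proximity, mulVec_transpose, huF])
      (by rw [← transpose_proximity, vecMul_transpose, hFv]) hlt
    simpa only [proximity_eq_one_iff, eq_comm] using this
  · left
    simpa only [proximity_eq_one_iff] using
      card_le_of_singular_proximity (hcard ▸ hE) ha hb hab hs hu hv hFv huF hlt

end Proximity

section UnitDistanceGraph

/-- The graph on a normed space joining the points at distance one. -/
def unitDistanceGraph (E : Type*) [NormedAddCommGroup E] : SimpleGraph E where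
  Adj x y := ‖x - y‖ = 1
  symm := ⟨fun x y h => (norm_sub_rev y x).trans h⟩
  loopless := ⟨fun x h => by simp at h⟩

variable {E : Type*} [NormedAddCommGroup E]

theorem unitDistanceGraph_adj {x y : E} : (unitDistanceGraph E).Adj x y ↔ ‖x - y‖ = 1 := Iff.rfl

theorem isUnitSimplex_coe_of_isClique {T : Finset E}
    (hT : (unitDistanceGraph E).IsClique T) :
    IsUnitSimplex fun t : T => (t : E) :=
  fun i j hij => hT i.2 j.2 (Subtype.coe_injective.ne hij)

variable {m : ℕ} {X T : Finset E}

theorem card_inter_add_norm_sub_sq_le_sum {D : Finset E} {w r : E}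
    (hD : (unitDistanceGraph E).IsClique D) (hw : w ∈ D) (hwT : w ∉ T) (hrT : r ∈ T) (hrD : r ∉ D) :
    #(D ∩ T) + ‖w - r‖ ^ 2 ≤ ∑ t ∈ T, ‖w - t‖ ^ 2 := by
  have hone : ∀ t ∈ D ∩ T, ‖w - t‖ ^ 2 = 1 := fun t ht => by
    rw [unitDistanceGraph_adj.1 (hD hw (mem_inter.1 ht).1 fun h => hwT (h ▸ (mem_inter.1 ht).2)),
      one_pow]
  calc #(D ∩ T) + ‖w - r‖ ^ 2 = ∑ t ∈ insert r (D ∩ T), ‖w - t‖ ^ 2 := by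
        rw [sum_insert fun h => hrD (mem_inter.1 h).1, sum_congr rfl hone, sum_const, nsmul_one,
          add_comm]
    _ ≤ ∑ t ∈ T, ‖w - t‖ ^ 2 := sum_le_sum_of_subset_of_nonneg
        (insert_subset hrT inter_subset_right) fun t _ _ => sq_nonneg _

theorem eq_insert_of_mem_of_sum_norm_sub_sq_le
    (hpair : ∀ A ∈ cliquesIn (unitDistanceGraph E) (m + 2) X,
      ∀ B ∈ cliquesIn (unitDistanceGraph E) (m + 2) X, m ≤ #(A ∩ B))
    {p q : E} (hp : insert p T ∈ cliquesIn (unitDistanceGraph E) (m + 2) X)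
    (hq : insert q T ∈ cliquesIn (unitDistanceGraph E) (m + 2) X) (hpq : p ≠ q) (hT : #T = m + 1)
    (hpT : p ∉ T)
    (hsum : ∀ w ∈ X, ‖w - q‖ = 1 → ∑ t ∈ T, ‖w - t‖ ^ 2 ≤ m)
    {D : Finset E} (hD : D ∈ cliquesIn (unitDistanceGraph E) (m + 2) X) (hqD : q ∈ D) :
    D = insert q T := by
  have hD_clique := (mem_cliquesIn.1 hD).2
  have hsumD : ∀ w ∈ D, w ≠ q → ∑ t ∈ T, ‖w - t‖ ^ 2 ≤ m := fun w hw hwq =>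
    hsum w ((mem_cliquesIn.1 hD).1 hw) (hD_clique.isClique hw hqD hwq)
  have hpD : p ∉ D := by
    intro hpD
    have hone : ∀ t ∈ T, ‖p - t‖ ^ 2 = 1 := fun t ht => by
      rw [(mem_cliquesIn.1 hp).2.isClique (mem_insert_self p T) (mem_insert_of_mem ht)
        (fun h => hpT (h ▸ ht)), one_pow]
    have := hsumD p hpD hpq
    rw [sum_congr rfl hone, sum_const, hT, nsmul_one, Nat.cast_succ] at this
    linarith
  have hDT : m ≤ #(D ∩ T) := by
    simpa only [inter_insert_of_notMem hpD] using hpair D hD _ hp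
  by_contra hne
  obtain ⟨w, hwD, hw⟩ : ∃ w ∈ D, w ∉ insert q T := by
    by_contra! hsub
    refine hne (eq_of_subset_of_card_le hsub ?_)
    rw [hD_clique.card_eq, (mem_cliquesIn.1 hq).2.card_eq]
  obtain ⟨r, hrT, hrD⟩ : ∃ r ∈ T, r ∉ D := by
    by_contra! hsub
    refine hne (eq_of_subset_of_card_le (insert_subset hqD hsub) ?_).symm
    rw [hD_clique.card_eq, (mem_cliquesIn.1 hq).2.card_eq]
  rw [mem_insert, not_or] at hw
  have hle := card_inter_add_norm_sub_sq_le_sum hD_clique.isClique hwD hw.2 hrT hrD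
  have hwr : ‖w - r‖ ^ 2 ≤ 0 := by
    have : (m : ℝ) ≤ #(D ∩ T) := by exact_mod_cast hDT
    linarith [hsumD w hwD hw.1]
  have hwr_eq : w = r := by
    simpa [sub_eq_zero] using le_antisymm hwr (sq_nonneg _)
  exact hrD (hwr_eq ▸ hwD)

variable [InnerProductSpace ℝ E] [FiniteDimensional ℝ E]

theorem le_card_inter_of_isNClique (hE : Module.finrank ℝ E ≤ m + 2) {A B : Finset E}
    (hA : (unitDistanceGraph E).IsNClique (m + 2) A)
    (hB : (unitDistanceGraph E).IsNClique (m + 2) B) (hAB : ∀ x ∈ A, ∀ y ∈ B, ‖x - y‖ ≤ 1) :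
    m ≤ #(A ∩ B) := by
  have hsub (x : A) (y : B) (h : (x : E) = y) : (x : E) ∈ A ∩ B := mem_inter.2 ⟨x.2, h ▸ y.2⟩
  have hsimplexes := card_le_card_exists_eq_add_two (a := fun x : A => (x : E))
    (b := fun y : B => (y : E))
    (by rwa [Fintype.card_coe, hA.card_eq]) (by simp_rw [Fintype.card_coe, hA.card_eq, hB.card_eq])
    (isUnitSimplex_coe_of_isClique hA.isClique) (isUnitSimplex_coe_of_isClique hB.isClique)
    fun x y => hAB x x.2 y y.2
  rw [Fintype.card_coe, Fintype.card_coe, hA.card_eq, hB.card_eq, Nat.add_le_add_iff_right,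
    Nat.add_le_add_iff_right] at hsimplexes
  obtain h | h := hsimplexes
  · refine h.trans (card_le_card_of_injOn Subtype.val (fun x hx => ?_) Subtype.val_injective.injOn)
    obtain ⟨y, hxy⟩ := (mem_filter.1 hx).2
    exact hsub x y hxy
  · refine h.trans (card_le_card_of_injOn Subtype.val (fun y hy => ?_) Subtype.val_injective.injOn)
    obtain ⟨x, hxy⟩ := (mem_filter.1 hy).2
    exact hxy ▸ hsub x y hxy

theorem exists_forall_mem_eq_of_not_isThin (hE : Module.finrank ℝ E ≤ m + 2)
    (hX : ∀ x ∈ X, ∀ y ∈ X, ‖x - y‖ ≤ 1)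
    (hpair : ∀ A ∈ cliquesIn (unitDistanceGraph E) (m + 2) X,
      ∀ B ∈ cliquesIn (unitDistanceGraph E) (m + 2) X, m ≤ #(A ∩ B))
    (hthin : ¬IsThin (unitDistanceGraph E) m X) :
    ∃ q ∈ X, ∃ N, ∀ D ∈ cliquesIn (unitDistanceGraph E) (m + 2) X, q ∈ D → D = N := by
  obtain ⟨T, hT, p, hpinj, hp⟩ := exists_three_insert_mem_of_not_isThin hthin
  have hclique (k : Fin 3) := (mem_cliquesIn.1 (hp k).2).2.isClique
  have hpX (k : Fin 3) : p k ∈ X := (mem_cliquesIn.1 (hp k).2).1 (mem_insert_self _ _)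
  have hTclique := (hclique 0).subset (coe_subset.2 (subset_insert _ T))
  have hpa (k : Fin 3) (t : T) : ‖p k - t‖ = 1 :=
    hclique k (mem_insert_self _ _) (mem_insert_of_mem t.2) fun h => (hp k).1 (h ▸ t.2)
  obtain ⟨i, hi⟩ := exists_forall_sum_norm_sub_sq_le (by rw [Fintype.card_coe, hT]; exact hE)
    (isUnitSimplex_coe_of_isClique hTclique) hpinj (fun k l => hX _ (hpX k) _ (hpX l)) hpa
  obtain ⟨k, hki⟩ := exists_ne i
  refine ⟨p i, hpX i, insert (p i) T, fun D hD => eq_insert_of_mem_of_sum_norm_sub_sq_le hpair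
    (hp k).2 (hp i).2 (hpinj.ne hki) hT (hp k).1 (fun w hw hwi => ?_) hD⟩
  have := hi w (fun k => hX w hw _ (hpX k)) hwi
  rw [Fintype.card_coe, hT, sum_coe_sort T fun t => ‖w - t‖ ^ 2] at this
  simpa using this

theorem card_cliquesIn_unitDistanceGraph_le (hE : Module.finrank ℝ E ≤ m + 2) :
    ∀ X : Finset E, (∀ x ∈ X, ∀ y ∈ X, ‖x - y‖ ≤ 1) →
      #(cliquesIn (unitDistanceGraph E) (m + 2) X) ≤ #X := by
  refine Finset.strongInduction fun X ih hX => ?_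
  have hpair : ∀ A ∈ cliquesIn (unitDistanceGraph E) (m + 2) X,
      ∀ B ∈ cliquesIn (unitDistanceGraph E) (m + 2) X, m ≤ #(A ∩ B) := by
    intro A hA B hB
    obtain ⟨hAX, hA⟩ := mem_cliquesIn.1 hA
    obtain ⟨hBX, hB⟩ := mem_cliquesIn.1 hB
    exact le_card_inter_of_isNClique hE hA hB fun x hx y hy => hX x (hAX hx) y (hBX hy)
  by_cases hthin : IsThin (unitDistanceGraph E) m X
  · by_cases hcard : m + 3 ≤ #X
    · simpa [hcard] using hthin.card_le_max hpair
    · exact card_cliquesIn_le_card_of_card_le (by omega)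
  · obtain ⟨q, hq, N, hN⟩ := exists_forall_mem_eq_of_not_isThin hE hX hpair hthin
    have hsub : cliquesIn (unitDistanceGraph E) (m + 2) X ⊆
        insert N (cliquesIn (unitDistanceGraph E) (m + 2) (X.erase q)) := by
      intro D hD
      by_cases hqD : q ∈ D
      · exact mem_insert.2 (Or.inl (hN D hD hqD))
      · obtain ⟨hDX, hD⟩ := mem_cliquesIn.1 hD
        exact mem_insert_of_mem (mem_cliquesIn.2 ⟨subset_erase.2 ⟨hDX, hqD⟩, hD⟩)
    calc #(cliquesIn (unitDistanceGraph E) (m + 2) X)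
        ≤ #(cliquesIn (unitDistanceGraph E) (m + 2) (X.erase q)) + 1 :=
          (card_le_card hsub).trans (card_insert_le _ _)
      _ ≤ #(X.erase q) + 1 := Nat.succ_le_succ (ih _ (erase_ssubset hq)
          fun x hx y hy => hX x (mem_of_mem_erase hx) y (mem_of_mem_erase hy))
      _ = #X := card_erase_add_one hq

theorem exists_card_cliquesIn_eq_card (hE : Module.finrank ℝ E ≤ m + 2) {P : Finset E} {p q : E}
    (hT : (unitDistanceGraph E).IsNClique (m + 1) T) (hP : ∀ x ∈ P, ∀ y ∈ P, ‖x - y‖ ≤ 1)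
    (hp : p ∈ P) (hq : q ∈ P) (hpq : ‖p - q‖ = 1) (hTP : ∀ t ∈ T, ∀ x ∈ P, ‖t - x‖ = 1) :
    ∃ X : Finset E, #X = m + 1 + #P ∧ (∀ x ∈ X, ∀ y ∈ X, ‖x - y‖ ≤ 1) ∧
      #(cliquesIn (unitDistanceGraph E) (m + 2) X) = #X := by
  have hdisj : Disjoint T P := disjoint_left.2 fun t ht htP => by simpa using hTP t ht t htP
  have hdiam : ∀ x ∈ T ∪ P, ∀ y ∈ T ∪ P, ‖x - y‖ ≤ 1 := by
    intro x hx y hy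
    obtain hx | hx := mem_union.1 hx <;> obtain hy | hy := mem_union.1 hy
    · obtain rfl | hxy := eq_or_ne x y
      · simp
      · exact (hT.isClique hx hy hxy).le
    · exact (hTP x hx y hy).le
    · exact norm_sub_rev x y ▸ (hTP y hy x hx).le
    · exact hP x hx y hy
  exact ⟨T ∪ P, by rw [card_union_of_disjoint hdisj, hT.card_eq], hdiam,
    (card_cliquesIn_unitDistanceGraph_le hE _ hdiam).antisymm
      (card_union_le_card_cliquesIn hT hp hq hpq hTP)⟩

end UnitDistanceGraph

section Construction

variable {m : ℕ}

/-- The vertices of a regular `m`-simplex of side one in the hyperplane `x₀ = 0`. -/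
noncomputable def simplexVertex (m : ℕ) (i : Fin (m + 1)) : EuclideanSpace ℝ (Fin (m + 2)) :=
  WithLp.toLp 2 (Fin.cons 0 (Pi.single i √(1 / 2)))

/-- The circle of points at distance one from all the points `simplexVertex m i`: its centre is
their centroid, and its plane is the orthogonal complement of their affine span. -/
noncomputable def circlePoint (m : ℕ) (s : ℝ) : EuclideanSpace ℝ (Fin (m + 2)) :=
  WithLp.toLp 2 (Fin.cons (√((m + 2) / (2 * (m + 1))) * Real.sin s) fun _ =>
    √(1 / 2) / (m + 1) + √((m + 2) / 2) / (m + 1) * Real.cos s)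

theorem norm_toLp_cons_sub_sq {k : ℕ} (p q : ℝ) (f g : Fin k → ℝ) :
    ‖(WithLp.toLp 2 (Fin.cons p f : Fin (k + 1) → ℝ) -
      WithLp.toLp 2 (Fin.cons q g) : EuclideanSpace ℝ (Fin (k + 1)))‖ ^ 2 =
      (p - q) ^ 2 + ∑ i, (f i - g i) ^ 2 := by
  simp [EuclideanSpace.real_norm_sq_eq, Fin.sum_univ_succ]

theorem sum_const_sub_single_sq {k : ℕ} (c r : ℝ) (i : Fin k) :
    ∑ j, (c - (Pi.single i r : Fin k → ℝ) j) ^ 2 = k * c ^ 2 - 2 * c * r + r ^ 2 := by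
  have h (j : Fin k) : (c - (Pi.single i r : Fin k → ℝ) j) ^ 2 =
      c ^ 2 + (Pi.single i (r ^ 2 - 2 * c * r) : Fin k → ℝ) j := by
    obtain rfl | hij := eq_or_ne j i
    · rw [Pi.single_eq_same, Pi.single_eq_same]
      ring
    · rw [Pi.single_eq_of_ne hij, Pi.single_eq_of_ne hij, sub_zero, add_zero]
  simp only [h, sum_add_distrib, sum_const, card_univ, Fintype.card_fin, nsmul_eq_mul,
    sum_pi_single', mem_univ, if_true]
  ring

theorem isUnitSimplex_simplexVertex (m : ℕ) : IsUnitSimplex (simplexVertex m) := by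
  intro i k hik
  rw [← sq_eq_sq₀ (norm_nonneg _) zero_le_one, simplexVertex, simplexVertex, norm_toLp_cons_sub_sq]
  have h (j : Fin (m + 1)) :
      ((Pi.single i √(1 / 2) : Fin (m + 1) → ℝ) j -
          (Pi.single k √(1 / 2) : Fin (m + 1) → ℝ) j) ^ 2 =
        (Pi.single i (1 / 2) : Fin (m + 1) → ℝ) j + (Pi.single k (1 / 2) : Fin (m + 1) → ℝ) j := by
    obtain rfl | hij := eq_or_ne j i
    · rw [Pi.single_eq_same, Pi.single_eq_same, Pi.single_eq_of_ne hik, Pi.single_eq_of_ne hik,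
        sub_zero, Real.sq_sqrt (by norm_num), add_zero]
    · rw [Pi.single_eq_of_ne hij, Pi.single_eq_of_ne hij, zero_sub, neg_sq, zero_add]
      obtain rfl | hkj := eq_or_ne j k
      · rw [Pi.single_eq_same, Pi.single_eq_same, Real.sq_sqrt (by norm_num)]
      · rw [Pi.single_eq_of_ne hkj, Pi.single_eq_of_ne hkj, sq, zero_mul]
  simp only [h, sum_add_distrib, sum_pi_single', mem_univ, if_true]
  norm_num

theorem norm_simplexVertex_sub_circlePoint (i : Fin (m + 1)) (s : ℝ) :
    ‖simplexVertex m i - circlePoint m s‖ = 1 := by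
  rw [norm_sub_rev, ← sq_eq_sq₀ (norm_nonneg _) zero_le_one, simplexVertex, circlePoint,
    norm_toLp_cons_sub_sq, sum_const_sub_single_sq]
  have h₁ : √(1 / 2 : ℝ) ^ 2 = 1 / 2 := Real.sq_sqrt (by norm_num)
  have h₂ : √((m + 2 : ℝ) / 2) ^ 2 = (m + 2) / 2 := Real.sq_sqrt (by positivity)
  have h₃ : √((m + 2 : ℝ) / (2 * (m + 1))) ^ 2 = (m + 2) / (2 * (m + 1)) :=
    Real.sq_sqrt (by positivity)
  have hm : (m : ℝ) + 1 ≠ 0 := by positivity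
  calc _ = √((m + 2 : ℝ) / (2 * (m + 1))) ^ 2 * Real.sin s ^ 2
        + √((m + 2 : ℝ) / 2) ^ 2 / (m + 1) * Real.cos s ^ 2
        + √(1 / 2 : ℝ) ^ 2 * (1 - 1 / (m + 1)) := by
        push_cast
        field_simp
        ring
    _ = 1 ^ 2 := by
        rw [h₁, h₂, h₃, Real.sin_sq]
        field_simp
        ring

theorem norm_circlePoint_sub_sq (s t : ℝ) : ‖circlePoint m s - circlePoint m t‖ ^ 2 =
    (m + 2) / (m + 1) * (1 - Real.cos (s - t)) := by
  rw [circlePoint, circlePoint, norm_toLp_cons_sub_sq, sum_const, card_univ, Fintype.card_fin,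
    nsmul_eq_mul, Real.cos_sub]
  have h₂ : √((m + 2 : ℝ) / 2) ^ 2 = (m + 2) / 2 := Real.sq_sqrt (by positivity)
  have h₃ : √((m + 2 : ℝ) / (2 * (m + 1))) ^ 2 = (m + 2) / (2 * (m + 1)) :=
    Real.sq_sqrt (by positivity)
  have hm : (m : ℝ) + 1 ≠ 0 := by positivity
  calc _ = √((m + 2 : ℝ) / (2 * (m + 1))) ^ 2 * (Real.sin s - Real.sin t) ^ 2
        + √((m + 2 : ℝ) / 2) ^ 2 / (m + 1) * (Real.cos s - Real.cos t) ^ 2 := by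
        push_cast
        field_simp
        ring
    _ = (m + 2) / (2 * (m + 1)) * ((Real.sin s ^ 2 + Real.cos s ^ 2)
        + (Real.sin t ^ 2 + Real.cos t ^ 2)
        - 2 * (Real.cos s * Real.cos t + Real.sin s * Real.sin t)) := by
        rw [h₂, h₃]
        field_simp
        ring
    _ = _ := by
        rw [Real.sin_sq_add_cos_sq, Real.sin_sq_add_cos_sq]
        field_simp
        ring

theorem injOn_circlePoint (m : ℕ) : Set.InjOn (circlePoint m) (Set.Icc 0 Real.pi) := by
  intro s hs t ht hst
  refine Real.injOn_cos hs ht ?_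
  have hcoord := congr_arg (fun x => x.ofLp (Fin.succ 0)) hst
  simp only [circlePoint, Fin.cons_succ, add_right_inj] at hcoord
  exact mul_left_cancel₀ (by positivity) hcoord

theorem cos_arccos_one_div_add_two (m : ℕ) :
    Real.cos (Real.arccos (1 / (m + 2))) = 1 / (m + 2) := by
  refine Real.cos_arccos (neg_one_lt_zero.le.trans (by positivity)) ?_
  rw [div_le_one (by positivity)]
  linarith [m.cast_nonneg (α := ℝ)]

theorem norm_circlePoint_sub_le_one {s t : ℝ}
    (hs : s ∈ Set.Icc 0 (Real.arccos (1 / (m + 2))))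
    (ht : t ∈ Set.Icc 0 (Real.arccos (1 / (m + 2)))) :
    ‖circlePoint m s - circlePoint m t‖ ≤ 1 := by
  have hcos : 1 / (m + 2 : ℝ) ≤ Real.cos (s - t) := by
    rw [← cos_arccos_one_div_add_two, ← Real.cos_abs (s - t)]
    exact Real.cos_le_cos_of_nonneg_of_le_pi (abs_nonneg _) (Real.arccos_le_pi _)
      (abs_sub_le_of_nonneg_of_le hs.1 hs.2 ht.1 ht.2)
  rw [← sq_le_one_iff₀ (norm_nonneg _), norm_circlePoint_sub_sq]
  calc (m + 2 : ℝ) / (m + 1) * (1 - Real.cos (s - t))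
      ≤ (m + 2) / (m + 1) * (1 - 1 / (m + 2)) := by gcongr
    _ = 1 := by
        field_simp
        ring

theorem norm_circlePoint_zero_sub_arccos (m : ℕ) :
    ‖circlePoint m 0 - circlePoint m (Real.arccos (1 / (m + 2)))‖ = 1 := by
  rw [← sq_eq_sq₀ (norm_nonneg _) zero_le_one, norm_circlePoint_sub_sq, zero_sub, Real.cos_neg,
    cos_arccos_one_div_add_two]
  field_simp
  ring

theorem exists_circle_points {l : ℕ} (m : ℕ) (hl : 2 ≤ l) :
    ∃ P : Finset (EuclideanSpace ℝ (Fin (m + 2))), #P = l ∧ (∀ x ∈ P, ∀ y ∈ P, ‖x - y‖ ≤ 1) ∧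
      (∃ p ∈ P, ∃ q ∈ P, ‖p - q‖ = 1) ∧ ∀ x ∈ P, ∀ i, ‖simplexVertex m i - x‖ = 1 := by
  set θ := Real.arccos (1 / (m + 2))
  have hθ : 0 < θ := Real.arccos_pos.2 <| by
    rw [div_lt_one (by positivity)]
    linarith [m.cast_nonneg (α := ℝ)]
  have := Set.Icc.infinite hθ
  obtain ⟨S, hS, hcard⟩ := Infinite.exists_superset_card_eq
    {(⟨0, Set.left_mem_Icc.2 hθ.le⟩ : Set.Icc 0 θ), ⟨θ, Set.right_mem_Icc.2 hθ.le⟩} l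
    (card_le_two.trans hl)
  refine ⟨S.image fun s : Set.Icc 0 θ => circlePoint m s, ?_, ?_, ?_, ?_⟩
  · rw [card_image_of_injective, hcard]
    exact ((injOn_circlePoint m).mono (Set.Icc_subset_Icc_right (Real.arccos_le_pi _))).injective
  · simp only [forall_mem_image]
    exact fun s _ t _ => norm_circlePoint_sub_le_one s.2 t.2
  · exact ⟨_, mem_image_of_mem _ (hS (mem_insert_self _ _)), _,
      mem_image_of_mem _ (hS (mem_insert_of_mem (mem_singleton_self _))),
      norm_circlePoint_zero_sub_arccos m⟩
  · simp only [forall_mem_image]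
    exact fun s _ i => norm_simplexVertex_sub_circlePoint i s

theorem exists_card_cliquesIn_eq {n : ℕ} (hn : m + 3 ≤ n) :
    ∃ X : Finset (EuclideanSpace ℝ (Fin (m + 2))), #X = n ∧ (∀ x ∈ X, ∀ y ∈ X, ‖x - y‖ ≤ 1) ∧
      #(cliquesIn (unitDistanceGraph _) (m + 2) X) = n := by
  obtain ⟨P, hPcard, hP, ⟨p, hp, q, hq, hpq⟩, hTP⟩ :=
    exists_circle_points m (show 2 ≤ n - (m + 1) by omega)
  have hsimplex := isUnitSimplex_simplexVertex m
  set T := univ.map ⟨simplexVertex m, hsimplex.injective⟩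
  have hT : (unitDistanceGraph _).IsNClique (m + 1) T := by
    refine ⟨fun x hx y hy hxy => ?_, by rw [card_map, card_univ, Fintype.card_fin]⟩
    obtain ⟨⟨i, -, rfl⟩, ⟨j, -, rfl⟩⟩ := mem_map.1 hx, mem_map.1 hy
    exact hsimplex fun h => hxy (congr_arg _ h)
  have hadj : ∀ t ∈ T, ∀ x ∈ P, ‖t - x‖ = 1 := fun t ht x hx => by
    obtain ⟨i, -, rfl⟩ := mem_map.1 ht
    exact hTP x hx i
  obtain ⟨X, hcard, hX⟩ :=
    exists_card_cliquesIn_eq_card finrank_euclideanSpace_fin.le hT hP hp hq hpq hadj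
  have hXn : #X = n := by omega
  exact ⟨X, hXn, hX.1, hX.2.trans hXn⟩

end Construction

theorem schur_conjecture_R4_general (d n : ℕ) (hd : 2 ≤ d) (hn : d + 1 ≤ n) :
    (∀ X : Finset (EuclideanSpace ℝ (Fin d)), #X = n → (∀ x ∈ X, ∀ y ∈ X, ‖x - y‖ ≤ 1) →
      #(cliquesIn (unitDistanceGraph _) d X) ≤ n) ∧
    ∃ X : Finset (EuclideanSpace ℝ (Fin d)), #X = n ∧ (∀ x ∈ X, ∀ y ∈ X, ‖x - y‖ ≤ 1) ∧
      #(cliquesIn (unitDistanceGraph _) d X) = n := by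
  obtain ⟨m, rfl⟩ := Nat.exists_eq_add_of_le' hd
  exact ⟨fun X hXn hX => hXn ▸
    card_cliquesIn_unitDistanceGraph_le finrank_euclideanSpace_fin.le X hX,
    exists_card_cliquesIn_eq hn⟩

theorem cliquesIn_unitDistanceGraph_eq_unitSimplices (X : Finset (EuclideanSpace ℝ (Fin 4))) :
    cliquesIn (unitDistanceGraph _) 4 X = unitSimplices X := by
  ext s
  rw [mem_cliquesIn, unitSimplices, mem_filter, mem_powersetCard, SimpleGraph.isNClique_iff]
  exact ⟨fun h => ⟨⟨h.1, h.2.2⟩, h.2.1⟩, fun h => ⟨h.1.1, h.2, h.1.2⟩⟩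

/-- Schur's conjecture in `ℝ⁴`. -/
theorem schur_conjecture_R4 (n : ℕ) (hn : n ≥ 5) :
    (∀ X : Finset (EuclideanSpace ℝ (Fin 4)), X.card = n →
      (∀ x ∈ X, ∀ y ∈ X, ‖x - y‖ ≤ 1) → (unitSimplices X).card ≤ n) ∧
    (∃ X : Finset (EuclideanSpace ℝ (Fin 4)), X.card = n ∧
      (∀ x ∈ X, ∀ y ∈ X, ‖x - y‖ ≤ 1) ∧ (unitSimplices X).card = n) := by
  simpa only [cliquesIn_unitDistanceGraph_eq_unitSimplices] using
    schur_conjecture_R4_general 4 n (by norm_num) hn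
end

section
/- Let X be a finite set of n points lying on a circle in the Euclidean plane (i.e., there are a point O ∈ ℝ² and a radius r > 0 with ‖x − O‖ = r for all x ∈ X), with all pairwise distances at most 1. Then the number of unordered pairs {x, y} ⊆ X with ‖x − y‖ = 1 is at most n if n is odd, and at most n − 1 if n is even. -/
attribute [local instance] Classical.propDecidable

/-- The set of unordered pairs of points of `X ⊆ ℝ²` at distance exactly `1`. -/
noncomputable def unitPairs2 (X : Finset (EuclideanSpace ℝ (Fin 2))) :
    Finset (Finset (EuclideanSpace ℝ (Fin 2))) :=
  (X.powersetCard 2).filter (fun s => ∀ x ∈ s, ∀ y ∈ s, x ≠ y → ‖x - y‖ = 1)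

/-!
Fix `x ∈ X` and cut the circle along the line through its centre `O` and `x`. If two points at the
maximal distance `d` lie on the same closed side of that line, the angle between them at `O` is the
difference of their angles to `x`; as neither of these exceeds it, one of the two points is `x`.
Hence at most one diameter misses an open side, and each point of that side lies on at most two
diameters. So there are at most `2 * l + 1` diameters, where `l` is the number of points on either
open side; since `x` is on neither side, the smaller `l` satisfies `2 * l ≤ n - 1`.
-/

open EuclideanGeometry Module
open scoped Finset

section DistPairs

variable {α : Type*} [PseudoMetricSpace α] {X L : Finset α} {d : ℝ} {e : Finset α}

/-- The edges of the distance-`d` graph on `X`, as two-element subsets of `X`; they are the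
diameters of `X` when no two points of `X` are further than `d` apart. -/
noncomputable def distPairs (X : Finset α) (d : ℝ) : Finset (Finset α) :=
  {e ∈ X.powersetCard 2 | ∀ u ∈ e, ∀ v ∈ e, u ≠ v → dist u v = d}

theorem mem_distPairs :
    e ∈ distPairs X d ↔ ∃ u ∈ X, ∃ v ∈ X, u ≠ v ∧ dist u v = d ∧ e = {u, v} := by
  rw [distPairs, Finset.mem_filter, Finset.mem_powersetCard]
  constructor
  · rintro ⟨⟨heX, hcard⟩, hdist⟩
    obtain ⟨u, v, huv, rfl⟩ := Finset.card_eq_two.mp hcard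
    exact ⟨u, heX (by simp), v, heX (by simp), huv, hdist u (by simp) v (by simp) huv, rfl⟩
  · rintro ⟨u, hu, v, hv, huv, rfl, rfl⟩
    refine ⟨⟨by simp [Finset.insert_subset_iff, hu, hv], Finset.card_pair huv⟩, ?_⟩
    simp [dist_comm]

theorem exists_eq_pair_of_mem_distPairs {u : α} (he : e ∈ distPairs X d) (hu : u ∈ e) :
    ∃ v ∈ X, dist u v = d ∧ e = {u, v} := by
  obtain ⟨a, ha, b, hb, -, hab, rfl⟩ := mem_distPairs.mp he
  rcases Finset.mem_insert.mp hu with rfl | hub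
  · exact ⟨b, hb, hab, rfl⟩
  · obtain rfl := Finset.mem_singleton.mp hub
    exact ⟨a, ha, dist_comm a u ▸ hab, Finset.pair_comm a u⟩

theorem card_distPairs_meeting_le {k : ℕ} (hL : ∀ u ∈ L, #{v ∈ X | dist u v = d} ≤ k) :
    #{e ∈ distPairs X d | ∃ u ∈ L, u ∈ e} ≤ #L * k := by
  have hcover : {e ∈ distPairs X d | ∃ u ∈ L, u ∈ e} ⊆
      L.biUnion fun u ↦ {v ∈ X | dist u v = d}.image fun v ↦ {u, v} := by
    intro e he
    obtain ⟨he, u, huL, hue⟩ := Finset.mem_filter.mp he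
    obtain ⟨v, hv, huv, rfl⟩ := exists_eq_pair_of_mem_distPairs he hue
    exact Finset.mem_biUnion.mpr ⟨u, huL, Finset.mem_image_of_mem _ (by simp [hv, huv])⟩
  exact (Finset.card_le_card hcover).trans <| Finset.card_biUnion_le_card_mul _ _ _
    fun u hu ↦ Finset.card_image_le.trans (hL u hu)

end DistPairs

theorem cos_sub_eq_cos_abs_toReal_sub_abs_toReal {θ ψ : Real.Angle} {s : SignType} (hs : s ≠ 0)
    (hθ : θ.sign ≠ s) (hψ : ψ.sign ≠ s) :
    (θ - ψ).cos = Real.cos (|θ.toReal| - |ψ.toReal|) := by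
  have nonneg_of_ne : ∀ t : SignType, t ≠ -1 → 0 ≤ t := by decide
  have nonpos_of_ne : ∀ t : SignType, t ≠ 1 → t ≤ 0 := by decide
  rw [← Real.Angle.cos_coe, Real.Angle.coe_sub]
  rcases SignType.trichotomy s with rfl | rfl | rfl
  · rw [Real.Angle.coe_abs_toReal_of_sign_nonneg (nonneg_of_ne _ hθ),
      Real.Angle.coe_abs_toReal_of_sign_nonneg (nonneg_of_ne _ hψ)]
  · exact absurd rfl hs
  · rw [← neg_sub_neg ((|ψ.toReal| : ℝ) : Real.Angle),
      Real.Angle.neg_coe_abs_toReal_of_sign_nonpos (nonpos_of_ne _ hθ),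
      Real.Angle.neg_coe_abs_toReal_of_sign_nonpos (nonpos_of_ne _ hψ), ← Real.Angle.cos_neg,
      neg_sub]

section Circle

variable {V P : Type*} [NormedAddCommGroup V] [InnerProductSpace ℝ V] [MetricSpace P]
  [NormedAddTorsor V P] {O a b u v : P} {r : ℝ}

theorem dist_sq_eq_of_dist_eq (hu : dist u O = r) (hv : dist v O = r) :
    dist u v ^ 2 = 2 * r ^ 2 * (1 - Real.cos (∠ u O v)) := by
  have hcos := dist_sq_eq_dist_sq_add_dist_sq_sub_two_mul_dist_mul_dist_mul_cos_angle u O v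
  rw [hu, hv] at hcos
  linear_combination hcos

theorem angle_le_angle_iff_dist_le_dist (hr : r ≠ 0) (ha : dist a O = r) (hb : dist b O = r)
    (hu : dist u O = r) (hv : dist v O = r) : ∠ a O b ≤ ∠ u O v ↔ dist a b ≤ dist u v := by
  have hr2 : 0 < 2 * r ^ 2 := by positivity
  rw [← sq_le_sq₀ dist_nonneg dist_nonneg, dist_sq_eq_of_dist_eq ha hb, dist_sq_eq_of_dist_eq hu hv,
    mul_le_mul_iff_right₀ hr2, sub_le_sub_iff_left,
    Real.strictAntiOn_cos.le_iff_ge ⟨angle_nonneg _ _ _, angle_le_pi _ _ _⟩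
      ⟨angle_nonneg _ _ _, angle_le_pi _ _ _⟩]

theorem eq_of_dist_eq_of_angle_eq_zero (hu : dist u O = r) (hv : dist v O = r)
    (h : ∠ u O v = 0) : u = v := by
  simpa [h] using dist_sq_eq_of_dist_eq hu hv

theorem card_filter_dist_eq_le_two (hV : finrank ℝ V = 2)
    {X : Finset P} {d : ℝ} (hX : ∀ p ∈ X, dist p O = r) (huO : u ≠ O) :
    #{v ∈ X | dist u v = d} ≤ 2 := by
  have : FiniteDimensional ℝ V := .of_finrank_pos (hV ▸ two_pos)
  by_contra! hlt
  obtain ⟨a, ha, b, hb, c, hc, hab, hac, hbc⟩ := Finset.two_lt_card.mp hlt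
  simp only [Finset.mem_filter, dist_comm u] at ha hb hc
  rcases eq_of_dist_eq_of_dist_eq_of_finrank_eq_two hV huO.symm hab
    (hX a ha.1) (hX b hb.1) (hX c hc.1) ha.2 hb.2 hc.2 with h | h
  · exact hac h.symm
  · exact hbc h.symm

end Circle

section Sides

variable {V P : Type*} [NormedAddCommGroup V] [InnerProductSpace ℝ V] [MetricSpace P]
  [NormedAddTorsor V P] [Fact (finrank ℝ V = 2)] {O x u v : P} {r d : ℝ} {X : Finset P}
  [Module.Oriented ℝ V (Fin 2)] {s : SignType}

theorem angle_eq_abs_sub_of_oangle_sign_ne (hx : x ≠ O) (hu : u ≠ O) (hv : v ≠ O) (hs : s ≠ 0)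
    (hus : (∡ x O u).sign ≠ s) (hvs : (∡ x O v).sign ≠ s) :
    ∠ u O v = |∠ x O v - ∠ x O u| := by
  have hcos : Real.cos (∠ u O v) = Real.cos |∠ x O v - ∠ x O u| := by
    rw [Real.cos_abs, angle_eq_abs_oangle_toReal hx hu, angle_eq_abs_oangle_toReal hx hv,
      ← cos_sub_eq_cos_abs_toReal_sub_abs_toReal hs hvs hus, oangle_sub_left hx hu hv,
      cos_oangle_eq_cos_angle hu hv]
  refine Real.injOn_cos ⟨angle_nonneg _ _ _, angle_le_pi _ _ _⟩ ⟨abs_nonneg _, ?_⟩ hcos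
  exact abs_sub_le_of_nonneg_of_le (angle_nonneg _ _ _) (angle_le_pi _ _ _) (angle_nonneg _ _ _)
    (angle_le_pi _ _ _)

theorem eq_or_eq_of_dist_le_of_oangle_sign_ne (hr : r ≠ 0) (hx : dist x O = r) (hu : dist u O = r)
    (hv : dist v O = r) (hs : s ≠ 0) (hus : (∡ x O u).sign ≠ s) (hvs : (∡ x O v).sign ≠ s)
    (hxu : dist x u ≤ dist u v) (hxv : dist x v ≤ dist u v) : x = u ∨ x = v := by
  have hne {p : P} (hp : dist p O = r) : p ≠ O := dist_ne_zero.mp (hp ▸ hr)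
  have huv := angle_eq_abs_sub_of_oangle_sign_ne (hne hx) (hne hu) (hne hv) hs hus hvs
  rw [← angle_le_angle_iff_dist_le_dist hr hx hu hu hv] at hxu
  rw [← angle_le_angle_iff_dist_le_dist hr hx hv hu hv] at hxv
  have hzero : ∠ x O u = 0 ∨ ∠ x O v = 0 := by
    have := angle_nonneg x O u
    have := angle_nonneg x O v
    grind
  exact hzero.imp (eq_of_dist_eq_of_angle_eq_zero hx hu) (eq_of_dist_eq_of_angle_eq_zero hx hv)

theorem eq_of_dist_eq_of_oangle_sign_ne (hr : r ≠ 0) (hx : dist x O = r) (hu : dist u O = r)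
    (hv : dist v O = r) (hs : s ≠ 0) (hus : (∡ x O u).sign ≠ s) (hvs : (∡ x O v).sign ≠ s)
    (hdist : dist x u = dist x v) : u = v := by
  have hne {p : P} (hp : dist p O = r) : p ≠ O := dist_ne_zero.mp (hp ▸ hr)
  have hangle : ∠ x O u = ∠ x O v :=
    le_antisymm ((angle_le_angle_iff_dist_le_dist hr hx hu hx hv).mpr hdist.le)
      ((angle_le_angle_iff_dist_le_dist hr hx hv hx hu).mpr hdist.ge)
  apply eq_of_dist_eq_of_angle_eq_zero hu hv
  rw [angle_eq_abs_sub_of_oangle_sign_ne (hne hx) (hne hu) (hne hv) hs hus hvs, hangle, sub_self,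
    abs_zero]

/-- The points of `X` on one of the two open sides of the line through `O` and `x`; the side is
selected by the sign `s = 1` or `s = -1` of the oriented angle seen from `O`. -/
noncomputable def openSide (X : Finset P) (O x : P) (s : SignType) : Finset P :=
  {u ∈ X | (∡ x O u).sign = s}

theorem card_openSide_add_card_openSide_lt (hx : x ∈ X) :
    #(openSide X O x 1) + #(openSide X O x (-1)) < #X := by
  have hdisj : Disjoint (openSide X O x 1) (openSide X O x (-1)) :=
    Finset.disjoint_filter.mpr fun u _ h h' ↦ absurd (h.symm.trans h') (by decide)
  rw [← Finset.card_union_of_disjoint hdisj]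
  refine Finset.card_lt_card (Finset.ssubset_iff_of_subset ?_ |>.mpr ⟨x, hx, ?_⟩)
  · exact Finset.union_subset (Finset.filter_subset _ _) (Finset.filter_subset _ _)
  · simp [openSide]

theorem exists_eq_pair_of_forall_notMem_openSide {e : Finset P} (hr : r ≠ 0)
    (hX : ∀ p ∈ X, dist p O = r) (hd : ∀ p ∈ X, ∀ q ∈ X, dist p q ≤ d) (hs : s ≠ 0) (hx : x ∈ X)
    (he : e ∈ distPairs X d) (hside : ∀ u ∈ openSide X O x s, u ∉ e) :
    ∃ v ∈ X, (∡ x O v).sign ≠ s ∧ dist x v = d ∧ e = {x, v} := by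
  have hsign {p : P} (hp : p ∈ X) (hpe : p ∈ e) : (∡ x O p).sign ≠ s := fun h ↦
    hside p (Finset.mem_filter.mpr ⟨hp, h⟩) hpe
  obtain ⟨u, hu, v, hv, -, rfl, rfl⟩ := mem_distPairs.mp he
  have hus := hsign hu (by simp)
  have hvs := hsign hv (by simp)
  rcases eq_or_eq_of_dist_le_of_oangle_sign_ne hr (hX x hx) (hX u hu) (hX v hv) hs hus hvs
    (hd x hx u hu) (hd x hx v hv) with rfl | rfl
  · exact ⟨v, hv, hvs, rfl, rfl⟩
  · exact ⟨u, hu, hus, dist_comm x u, Finset.pair_comm u x⟩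

theorem card_distPairs_avoiding_openSide_le_one (hr : r ≠ 0) (hX : ∀ p ∈ X, dist p O = r)
    (hd : ∀ p ∈ X, ∀ q ∈ X, dist p q ≤ d) (hs : s ≠ 0) (hx : x ∈ X) :
    #{e ∈ distPairs X d | ¬∃ u ∈ openSide X O x s, u ∈ e} ≤ 1 := by
  refine Finset.card_le_one.mpr fun e he e' he' ↦ ?_
  simp only [Finset.mem_filter, not_exists, not_and] at he he'
  obtain ⟨u, hu, hus, hxu, rfl⟩ :=
    exists_eq_pair_of_forall_notMem_openSide hr hX hd hs hx he.1 he.2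
  obtain ⟨v, hv, hvs, hxv, rfl⟩ :=
    exists_eq_pair_of_forall_notMem_openSide hr hX hd hs hx he'.1 he'.2
  rw [eq_of_dist_eq_of_oangle_sign_ne hr (hX x hx) (hX u hu) (hX v hv) hs hus hvs
    (hxu.trans hxv.symm)]

theorem card_distPairs_le_two_mul_card_openSide_add_one (hr : r ≠ 0)
    (hX : ∀ p ∈ X, dist p O = r) (hd : ∀ p ∈ X, ∀ q ∈ X, dist p q ≤ d) (hs : s ≠ 0) (hx : x ∈ X) :
    #(distPairs X d) ≤ #(openSide X O x s) * 2 + 1 := by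
  rw [← Finset.card_filter_add_card_filter_not fun e ↦ ∃ u ∈ openSide X O x s, u ∈ e]
  refine add_le_add (card_distPairs_meeting_le fun u hu ↦ ?_)
    (card_distPairs_avoiding_openSide_le_one hr hX hd hs hx)
  have huX : u ∈ X := Finset.mem_of_mem_filter u hu
  exact card_filter_dist_eq_le_two Fact.out hX (dist_ne_zero.mp (hX u huX ▸ hr))

end Sides

theorem diameters_on_circle_general {V P : Type*} [NormedAddCommGroup V] [InnerProductSpace ℝ V]
    [MetricSpace P] [NormedAddTorsor V P] [Fact (finrank ℝ V = 2)] {X : Finset P} {d : ℝ}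
    (hX : Cospherical (X : Set P)) (hd : ∀ x ∈ X, ∀ y ∈ X, dist x y ≤ d) :
    (Odd #X → #(distPairs X d) ≤ #X) ∧ (Even #X → #(distPairs X d) ≤ #X - 1) := by
  obtain ⟨O, r, hX⟩ := hX
  rcases (distPairs X d).eq_empty_or_nonempty with hempty | ⟨e, he⟩
  · simp [hempty]
  obtain ⟨x, hx, y, hy, hxy, -⟩ := mem_distPairs.mp he
  have hr : r ≠ 0 := by
    rintro rfl
    exact hxy ((dist_eq_zero.mp (hX x hx)).trans (dist_eq_zero.mp (hX y hy)).symm)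
  have : FiniteDimensional ℝ V := .of_fact_finrank_eq_two
  let : Module.Oriented ℝ V (Fin 2) :=
    ⟨(finBasisOfFinrankEq ℝ V Fact.out).orientation⟩
  have hpos := card_distPairs_le_two_mul_card_openSide_add_one hr hX hd (s := 1) (by decide) hx
  have hneg := card_distPairs_le_two_mul_card_openSide_add_one hr hX hd (s := -1) (by decide) hx
  have hsides := card_openSide_add_card_openSide_lt (O := O) hx
  grind

theorem diameters_on_circle (X : Finset (EuclideanSpace ℝ (Fin 2))) (n : ℕ)
    (hn : X.card = n) (O : EuclideanSpace ℝ (Fin 2)) (r : ℝ) (hr : r > 0)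
    (hcirc : ∀ x ∈ X, ‖x - O‖ = r)
    (hdiam : ∀ x ∈ X, ∀ y ∈ X, ‖x - y‖ ≤ 1) :
    (Odd n → (unitPairs2 X).card ≤ n) ∧ (Even n → (unitPairs2 X).card ≤ n - 1) := by
  simp only [← dist_eq_norm] at hcirc hdiam
  have hpairs : unitPairs2 X = distPairs X 1 := by simp only [unitPairs2, distPairs, dist_eq_norm]
  have : Fact (finrank ℝ (EuclideanSpace ℝ (Fin 2)) = 2) := ⟨finrank_euclideanSpace_fin⟩
  rw [hpairs, ← hn]
  exact diameters_on_circle_general ⟨O, r, hcirc⟩ hdiam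
end
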